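/- arXiv:1903.00806 — 2 statements merged into one kernel-verified Lean document; each statement's English description precedes it below -/
import Mathlib

section
/- The 4-IET with flips T defined from λ = Qν (with ν the Perron probability eigenvector of P) is minimal: every forward orbit is dense in [0,|λ|]. -/
set_option linter.unusedTactic false
set_option linter.unreachableTactic false

/-- The interval exchange with flips, in the coordinates `u, v, w` of the renormalized lengths. -/
noncomputable def TF (u v w x : ℝ) : ℝ :=
  if x < (7*u+3*v+5*w) then (16*u+7*v+12*w) - x
  else if x < (13*u+6*v+10*w) then (33*u+15*v+25*w) - x
  else if x < (22*u+10*v+17*w) then (22*u+10*v+17*w) - x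
  else (42*u+19*v+32*w) - x

/-- `y` is on the forward orbit of `x`. -/
def Reach (u v w x y : ℝ) : Prop := ∃ k : ℕ, (TF u v w)^[k] x = y

section
variable {u v w x y z : ℝ}

theorem Reach.of_eq (h : x = y) : Reach u v w x y := ⟨0, h⟩

theorem Reach.step (h : Reach u v w (TF u v w x) y) : Reach u v w x y := by
  obtain ⟨k, hk⟩ := h
  exact ⟨k + 1, by rw [Function.iterate_succ_apply]; exact hk⟩

theorem Reach.trans (h : Reach u v w x y) (h' : Reach u v w y z) : Reach u v w x z := by
  obtain ⟨k, rfl⟩ := h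
  obtain ⟨j, rfl⟩ := h'
  exact ⟨j + k, Function.iterate_add_apply _ _ _ _⟩

theorem TF1 (h : x < (7*u+3*v+5*w)) : TF u v w x = (16*u+7*v+12*w) - x := by
  simp only [TF]; rw [if_pos h]

theorem TF2 (h1 : (7*u+3*v+5*w) ≤ x) (h : x < (13*u+6*v+10*w)) : TF u v w x = (33*u+15*v+25*w) - x := by
  simp only [TF]; rw [if_neg (not_lt.mpr h1), if_pos h]

theorem TF3 (hu : 0 < u) (hv : 0 < v) (hw : 0 < w) (h1 : (13*u+6*v+10*w) ≤ x) (h : x < (22*u+10*v+17*w)) :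
    TF u v w x = (22*u+10*v+17*w) - x := by
  simp only [TF]; rw [if_neg (by linarith), if_neg (by linarith), if_pos h]

theorem TF4 (hu : 0 < u) (hv : 0 < v) (hw : 0 < w) (h1 : (22*u+10*v+17*w) ≤ x) :
    TF u v w x = (42*u+19*v+32*w) - x := by
  simp only [TF]; rw [if_neg (by linarith), if_neg (by linarith), if_neg (by linarith)]

theorem Reach.r1 (h : x < (7*u+3*v+5*w)) (h' : Reach u v w ((16*u+7*v+12*w) - x) y) : Reach u v w x y :=
  Reach.step (by rw [TF1 h]; exact h')

theorem Reach.r2 (h1 : (7*u+3*v+5*w) ≤ x) (h : x < (13*u+6*v+10*w))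
    (h' : Reach u v w ((33*u+15*v+25*w) - x) y) : Reach u v w x y :=
  Reach.step (by rw [TF2 h1 h]; exact h')

theorem Reach.r3 (hu : 0 < u) (hv : 0 < v) (hw : 0 < w) (h1 : (13*u+6*v+10*w) ≤ x)
    (h : x < (22*u+10*v+17*w)) (h' : Reach u v w ((22*u+10*v+17*w) - x) y) : Reach u v w x y :=
  Reach.step (by rw [TF3 hu hv hw h1 h]; exact h')

theorem Reach.r4 (hu : 0 < u) (hv : 0 < v) (hw : 0 < w) (h1 : (22*u+10*v+17*w) ≤ x)
    (h' : Reach u v w ((42*u+19*v+32*w) - x) y) : Reach u v w x y :=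
  Reach.step (by rw [TF4 hu hv hw h1]; exact h')

/-- The orbit of `x` visits the set `I`. -/
def Hits (u v w : ℝ) (I : Set ℝ) (x : ℝ) : Prop := ∃ y ∈ I, Reach u v w x y

theorem Hits.of_mem {I : Set ℝ} (h : x ∈ I) : Hits u v w I x := ⟨x, h, Reach.of_eq rfl⟩

theorem Hits.of_reach {I : Set ℝ} (h : Reach u v w x y) (h' : Hits u v w I y) : Hits u v w I x := by
  obtain ⟨z, hz, h2⟩ := h'
  exact ⟨z, hz, h.trans h2⟩

theorem Hits.r1 {I : Set ℝ} (h : x < (7*u+3*v+5*w)) (h' : Hits u v w I ((16*u+7*v+12*w) - x)) :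
    Hits u v w I x := h'.of_reach (Reach.r1 h (Reach.of_eq rfl))

theorem Hits.r2 {I : Set ℝ} (h1 : (7*u+3*v+5*w) ≤ x) (h : x < (13*u+6*v+10*w))
    (h' : Hits u v w I ((33*u+15*v+25*w) - x)) : Hits u v w I x :=
  h'.of_reach (Reach.r2 h1 h (Reach.of_eq rfl))

theorem Hits.r3 {I : Set ℝ} (hu : 0 < u) (hv : 0 < v) (hw : 0 < w) (h1 : (13*u+6*v+10*w) ≤ x)
    (h : x < (22*u+10*v+17*w)) (h' : Hits u v w I ((22*u+10*v+17*w) - x)) : Hits u v w I x :=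
  h'.of_reach (Reach.r3 hu hv hw h1 h (Reach.of_eq rfl))

theorem Hits.r4 {I : Set ℝ} (hu : 0 < u) (hv : 0 < v) (hw : 0 < w) (h1 : (22*u+10*v+17*w) ≤ x)
    (h' : Hits u v w I ((42*u+19*v+32*w) - x)) : Hits u v w I x :=
  h'.of_reach (Reach.r4 hu hv hw h1 (Reach.of_eq rfl))

/-! Every orbit enters `[0, m]`: a decreasing chain of intervals. -/

/-- The orbit of every point of `[0, m]` visits `[0, n]`. -/
def Enters (u v w m n : ℝ) : Prop := ∀ x, 0 ≤ x → x ≤ m → Hits u v w (Set.Icc 0 n) x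

theorem Enters.trans {m n k : ℝ} (h : Enters u v w m n) (h' : Enters u v w n k) :
    Enters u v w m k := by
  intro x h0 h1
  obtain ⟨y, ⟨hy0, hy1⟩, hy⟩ := h x h0 h1
  exact (h' y hy0 hy1).of_reach hy

theorem Enters.of_lt {m n : ℝ} (h : ∀ x, n < x → x < m → Hits u v w (Set.Icc 0 n) x)
    (hm : Hits u v w (Set.Icc 0 n) m) : Enters u v w m n := by
  intro x h0 h1
  rcases le_or_gt x n with h2 | h2
  · exact Hits.of_mem ⟨h0, h2⟩
  · rcases h1.eq_or_lt with h3 | h3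
    · exact h3 ▸ hm
    · exact h x h2 h3

set_option maxHeartbeats 4000000 in
theorem enter_all (hu : 0 < u) (hv : 0 < v) (hw : 0 < w) (h0 : 0 ≤ x) (h1 : x ≤ (26*u+12*v+20*w)) :
    Hits u v w (Set.Icc 0 (2*u+v+w)) x := by
  suffices h : Enters u v w (26*u+12*v+20*w) (2*u+v+w) from h x h0 h1
  refine Enters.trans (n := (22*u+10*v+17*w)) ?_ <|
    Enters.trans (n := (20*u+9*v+15*w)) ?_ <|
    Enters.trans (n := (16*u+7*v+12*w)) ?_ <|
    Enters.trans (n := (13*u+6*v+10*w)) ?_ <|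
    Enters.trans (n := (11*u+5*v+8*w)) ?_ <|
    Enters.trans (n := (9*u+4*v+7*w)) ?_ <|
    Enters.trans (n := (7*u+3*v+5*w)) ?_ <|
    Enters.trans (n := (6*u+3*v+5*w)) ?_ <|
    Enters.trans (n := (5*u+2*v+4*w)) ?_ <|
    Enters.trans (n := (4*u+2*v+3*w)) ?_ <|
    Enters.trans (n := (3*u+2*v+3*w)) ?_ <|
    Enters.trans (n := (3*u+v+2*w)) ?_ <|
    Enters.trans (n := (2*u+v+2*w)) ?_ <| ?_
  all_goals
    clear h0 h1
    refine Enters.of_lt (fun x h0 h1 => ?_) ?_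
  all_goals
    repeat first
      | exact Hits.of_mem ⟨by linarith, by linarith⟩
      | refine Hits.r1 (by linarith) ?_
      | refine Hits.r2 (by linarith) (by linarith) ?_
      | refine Hits.r3 hu hv hw (by linarith) (by linarith) ?_
      | refine Hits.r4 hu hv hw (by linarith) ?_

set_option maxHeartbeats 4000000 in
/-- The renormalization: the map induced on `[0, m]`. -/
theorem ren (s : ℝ) (hu : 0 < u) (hv : 0 < v) (hw : 0 < w) :
    (s = 0 → Reach u v w s (2*u+w)) ∧
    (0 < s → s < u → Reach u v w s (2*u+w-s)) ∧
    (s = u → Reach u v w s (2*u+w)) ∧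
    (u < s → s < u+v → Reach u v w s (s+u+w)) ∧
    (s = u+v → Reach u v w s (2*u+v+w)) ∧
    (u+v < s → s < u+v+w → Reach u v w s (s-u-v)) ∧
    (s = u+v+w → Reach u v w s (u+w)) ∧
    (u+v+w < s → s < 2*u+v+w → Reach u v w s (2*u+v+2*w-s)) ∧
    (s = 2*u+v+w → Reach u v w s (w)) := by
  refine ⟨?_, ?_, ?_, ?_, ?_, ?_, ?_, ?_, ?_⟩
  all_goals
    intros
    repeat first
      | exact Reach.of_eq (by linarith)
      | refine Reach.r1 (by linarith) ?_
      | refine Reach.r2 (by linarith) (by linarith) ?_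
      | refine Reach.r3 hu hv hw (by linarith) (by linarith) ?_
      | refine Reach.r4 hu hv hw (by linarith) ?_

/-- The orbit of `x` visits the interior of each of the four pieces. -/
def HitsAll (u v w x : ℝ) : Prop :=
  Hits u v w (Set.Ioo (0) (7*u+3*v+5*w)) x ∧
  Hits u v w (Set.Ioo (7*u+3*v+5*w) (11*u+5*v+8*w)) x ∧
  Hits u v w (Set.Ioo (11*u+5*v+8*w) (13*u+6*v+10*w)) x ∧
  Hits u v w (Set.Ioo (13*u+6*v+10*w) (20*u+9*v+15*w)) x

set_option maxHeartbeats 4000000 in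
theorem vis (s : ℝ) (hu : 0 < u) (hv : 0 < v) (hw : 0 < w) :
    (s = 0 → HitsAll u v w s) ∧
    (0 < s → s < u → HitsAll u v w s) ∧
    (s = u → HitsAll u v w s) ∧
    (u < s → s < u+v → HitsAll u v w s) ∧
    (s = u+v → HitsAll u v w s) ∧
    (u+v < s → s < u+v+w → HitsAll u v w s) ∧
    (s = u+v+w → HitsAll u v w s) ∧
    (u+v+w < s → s < 2*u+v+w → HitsAll u v w s) ∧
    (s = 2*u+v+w → HitsAll u v w s) := by
  refine ⟨?_, ?_, ?_, ?_, ?_, ?_, ?_, ?_, ?_⟩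
  all_goals
    intros
    refine ⟨?_, ?_, ?_, ?_⟩
  all_goals
    repeat first
      | exact Hits.of_mem ⟨by linarith, by linarith⟩
      | refine Hits.r1 (by linarith) ?_
      | refine Hits.r2 (by linarith) (by linarith) ?_
      | refine Hits.r3 hu hv hw (by linarith) (by linarith) ?_
      | refine Hits.r4 hu hv hw (by linarith) ?_

end

section
variable {u v w : ℝ}

/-- The orbit of `z`, inside the open interval `(p, q)`, is `r`-dense in `[p, q]`. -/
def Den (u v w z r p q : ℝ) : Prop :=
  ∀ t, p ≤ t → t ≤ q → ∃ x, Reach u v w z x ∧ p < x ∧ x < q ∧ |x - t| ≤ r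

theorem Den.glue {z r p q s : ℝ} (h : Den u v w z r p q) (h' : Den u v w z r q s) (h1 : p ≤ q := by linarith)
    (h2 : q ≤ s := by linarith) : Den u v w z r p s := by
  intro t ht1 ht2
  rcases le_total t q with h3 | h3
  · obtain ⟨x, hx, a1, a2, a3⟩ := h t ht1 h3
    exact ⟨x, hx, a1, by linarith, a3⟩
  · obtain ⟨x, hx, a1, a2, a3⟩ := h' t h3 ht2
    exact ⟨x, hx, by linarith, a2, a3⟩

theorem Den.image {z r p q : ℝ} (h : Den u v w z r p q) (C p' q' : ℝ)
    (hT : ∀ x, p < x → x < q → TF u v w x = C - x) (hp : p' = C - q) (hq : q' = C - p) :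
    Den u v w z r p' q' := by
  intro t ht1 ht2
  obtain ⟨x, hx, a1, a2, a3⟩ := h (C - t) (by linarith) (by linarith)
  refine ⟨C - x, hx.trans ⟨1, by simpa using hT x a1 a2⟩, by linarith, by linarith, ?_⟩
  rw [show C - x - t = -(x - (C - t)) by ring, abs_neg]
  exact a3

theorem Den.i1 {z r p q : ℝ} (p' q' : ℝ) (h : Den u v w z r p q) (h2 : q ≤ (7*u+3*v+5*w))
    (hp : p' = (16*u+7*v+12*w) - q) (hq : q' = (16*u+7*v+12*w) - p) : Den u v w z r p' q' :=
  h.image (16*u+7*v+12*w) p' q' (fun _ _ _ => TF1 (by linarith)) hp hq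

theorem Den.i2 {z r p q : ℝ} (p' q' : ℝ) (h : Den u v w z r p q) (h1 : (7*u+3*v+5*w) ≤ p) (h2 : q ≤ (13*u+6*v+10*w))
    (hp : p' = (33*u+15*v+25*w) - q) (hq : q' = (33*u+15*v+25*w) - p) : Den u v w z r p' q' :=
  h.image (33*u+15*v+25*w) p' q' (fun _ _ _ => TF2 (by linarith) (by linarith)) hp hq

theorem Den.i3 {z r p q : ℝ} (p' q' : ℝ) (h : Den u v w z r p q) (hu : 0 < u) (hv : 0 < v) (hw : 0 < w) (h1 : (13*u+6*v+10*w) ≤ p) (h2 : q ≤ (22*u+10*v+17*w))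
    (hp : p' = (22*u+10*v+17*w) - q) (hq : q' = (22*u+10*v+17*w) - p) : Den u v w z r p' q' :=
  h.image (22*u+10*v+17*w) p' q' (fun _ _ _ => TF3 hu hv hw (by linarith) (by linarith)) hp hq

theorem Den.i4 {z r p q : ℝ} (p' q' : ℝ) (h : Den u v w z r p q) (hu : 0 < u) (hv : 0 < v) (hw : 0 < w) (h1 : (22*u+10*v+17*w) ≤ p)
    (hp : p' = (42*u+19*v+32*w) - q) (hq : q' = (42*u+19*v+32*w) - p) : Den u v w z r p' q' :=
  h.image (42*u+19*v+32*w) p' q' (fun _ _ _ => TF4 hu hv hw (by linarith)) hp hq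

set_option maxHeartbeats 4000000 in
theorem den_up {z r : ℝ} (hu : 0 < u) (hv : 0 < v) (hw : 0 < w)
    (ha0 : Den u v w z r (0) (u)) (hb0 : Den u v w z r (u) (u+v))
    (hc0 : Den u v w z r (u+v) (u+v+w)) (hd0 : Den u v w z r (u+v+w) (2*u+v+w)) :
    Den u v w z r (0) (7*u+3*v+5*w) ∧
    Den u v w z r (7*u+3*v+5*w) (11*u+5*v+8*w) ∧
    Den u v w z r (11*u+5*v+8*w) (13*u+6*v+10*w) ∧
    Den u v w z r (13*u+6*v+10*w) (20*u+9*v+15*w) := by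
  have ha1 := Den.i1 (15*u+7*v+12*w) (16*u+7*v+12*w) ha0 (by linarith) (by ring) (by ring)
  have ha2 := Den.i3 (6*u+3*v+5*w) (7*u+3*v+5*w) ha1 hu hv hw (by linarith) (by linarith) (by ring) (by ring)
  have ha3 := Den.i1 (9*u+4*v+7*w) (10*u+4*v+7*w) ha2 (by linarith) (by ring) (by ring)
  have ha4 := Den.i2 (23*u+11*v+18*w) (24*u+11*v+18*w) ha3 (by linarith) (by linarith) (by ring) (by ring)
  have ha5 := Den.i4 (18*u+8*v+14*w) (19*u+8*v+14*w) ha4 hu hv hw (by linarith) (by ring) (by ring)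
  have ha6 := Den.i3 (3*u+2*v+3*w) (4*u+2*v+3*w) ha5 hu hv hw (by linarith) (by linarith) (by ring) (by ring)
  have ha7 := Den.i1 (12*u+5*v+9*w) (13*u+5*v+9*w) ha6 (by linarith) (by ring) (by ring)
  have ha8 := Den.i2 (20*u+10*v+16*w) (21*u+10*v+16*w) ha7 (by linarith) (by linarith) (by ring) (by ring)
  have hb1 := Den.i1 (15*u+6*v+12*w) (15*u+7*v+12*w) hb0 (by linarith) (by ring) (by ring)
  have hb2 := Den.i3 (7*u+3*v+5*w) (7*u+4*v+5*w) hb1 hu hv hw (by linarith) (by linarith) (by ring) (by ring)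
  have hb3 := Den.i2 (26*u+11*v+20*w) (26*u+12*v+20*w) hb2 (by linarith) (by linarith) (by ring) (by ring)
  have hb4 := Den.i4 (16*u+7*v+12*w) (16*u+8*v+12*w) hb3 hu hv hw (by linarith) (by ring) (by ring)
  have hb5 := Den.i3 (6*u+2*v+5*w) (6*u+3*v+5*w) hb4 hu hv hw (by linarith) (by linarith) (by ring) (by ring)
  have hb6 := Den.i1 (10*u+4*v+7*w) (10*u+5*v+7*w) hb5 (by linarith) (by ring) (by ring)
  have hb7 := Den.i2 (23*u+10*v+18*w) (23*u+11*v+18*w) hb6 (by linarith) (by linarith) (by ring) (by ring)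
  have hb8 := Den.i4 (19*u+8*v+14*w) (19*u+9*v+14*w) hb7 hu hv hw (by linarith) (by ring) (by ring)
  have hb9 := Den.i3 (3*u+v+3*w) (3*u+2*v+3*w) hb8 hu hv hw (by linarith) (by linarith) (by ring) (by ring)
  have hb10 := Den.i1 (13*u+5*v+9*w) (13*u+6*v+9*w) hb9 (by linarith) (by ring) (by ring)
  have hb11 := Den.i2 (20*u+9*v+16*w) (20*u+10*v+16*w) hb10 (by linarith) (by linarith) (by ring) (by ring)
  have hc1 := Den.i1 (15*u+6*v+11*w) (15*u+6*v+12*w) hc0 (by linarith) (by ring) (by ring)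
  have hc2 := Den.i3 (7*u+4*v+5*w) (7*u+4*v+6*w) hc1 hu hv hw (by linarith) (by linarith) (by ring) (by ring)
  have hc3 := Den.i2 (26*u+11*v+19*w) (26*u+11*v+20*w) hc2 (by linarith) (by linarith) (by ring) (by ring)
  have hc4 := Den.i4 (16*u+8*v+12*w) (16*u+8*v+13*w) hc3 hu hv hw (by linarith) (by ring) (by ring)
  have hc5 := Den.i3 (6*u+2*v+4*w) (6*u+2*v+5*w) hc4 hu hv hw (by linarith) (by linarith) (by ring) (by ring)
  have hc6 := Den.i1 (10*u+5*v+7*w) (10*u+5*v+8*w) hc5 (by linarith) (by ring) (by ring)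
  have hc7 := Den.i2 (23*u+10*v+17*w) (23*u+10*v+18*w) hc6 (by linarith) (by linarith) (by ring) (by ring)
  have hc8 := Den.i4 (19*u+9*v+14*w) (19*u+9*v+15*w) hc7 hu hv hw (by linarith) (by ring) (by ring)
  have hc9 := Den.i3 (3*u+v+2*w) (3*u+v+3*w) hc8 hu hv hw (by linarith) (by linarith) (by ring) (by ring)
  have hc10 := Den.i1 (13*u+6*v+9*w) (13*u+6*v+10*w) hc9 (by linarith) (by ring) (by ring)
  have hc11 := Den.i2 (20*u+9*v+15*w) (20*u+9*v+16*w) hc10 (by linarith) (by linarith) (by ring) (by ring)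
  have hc12 := Den.i3 (2*u+v+w) (2*u+v+2*w) hc11 hu hv hw (by linarith) (by linarith) (by ring) (by ring)
  have hc13 := Den.i1 (14*u+6*v+10*w) (14*u+6*v+11*w) hc12 (by linarith) (by ring) (by ring)
  have hc14 := Den.i3 (8*u+4*v+6*w) (8*u+4*v+7*w) hc13 hu hv hw (by linarith) (by linarith) (by ring) (by ring)
  have hc15 := Den.i2 (25*u+11*v+18*w) (25*u+11*v+19*w) hc14 (by linarith) (by linarith) (by ring) (by ring)
  have hc16 := Den.i4 (17*u+8*v+13*w) (17*u+8*v+14*w) hc15 hu hv hw (by linarith) (by ring) (by ring)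
  have hc17 := Den.i3 (5*u+2*v+3*w) (5*u+2*v+4*w) hc16 hu hv hw (by linarith) (by linarith) (by ring) (by ring)
  have hc18 := Den.i1 (11*u+5*v+8*w) (11*u+5*v+9*w) hc17 (by linarith) (by ring) (by ring)
  have hc19 := Den.i2 (22*u+10*v+16*w) (22*u+10*v+17*w) hc18 (by linarith) (by linarith) (by ring) (by ring)
  have hd1 := Den.i1 (14*u+6*v+11*w) (15*u+6*v+11*w) hd0 (by linarith) (by ring) (by ring)
  have hd2 := Den.i3 (7*u+4*v+6*w) (8*u+4*v+6*w) hd1 hu hv hw (by linarith) (by linarith) (by ring) (by ring)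
  have hd3 := Den.i2 (25*u+11*v+19*w) (26*u+11*v+19*w) hd2 (by linarith) (by linarith) (by ring) (by ring)
  have hd4 := Den.i4 (16*u+8*v+13*w) (17*u+8*v+13*w) hd3 hu hv hw (by linarith) (by ring) (by ring)
  have hd5 := Den.i3 (5*u+2*v+4*w) (6*u+2*v+4*w) hd4 hu hv hw (by linarith) (by linarith) (by ring) (by ring)
  have hd6 := Den.i1 (10*u+5*v+8*w) (11*u+5*v+8*w) hd5 (by linarith) (by ring) (by ring)
  have hd7 := Den.i2 (22*u+10*v+17*w) (23*u+10*v+17*w) hd6 (by linarith) (by linarith) (by ring) (by ring)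
  have hd8 := Den.i4 (19*u+9*v+15*w) (20*u+9*v+15*w) hd7 hu hv hw (by linarith) (by ring) (by ring)
  have hd9 := Den.i3 (2*u+v+2*w) (3*u+v+2*w) hd8 hu hv hw (by linarith) (by linarith) (by ring) (by ring)
  have hd10 := Den.i1 (13*u+6*v+10*w) (14*u+6*v+10*w) hd9 (by linarith) (by ring) (by ring)
  have hd11 := Den.i3 (8*u+4*v+7*w) (9*u+4*v+7*w) hd10 hu hv hw (by linarith) (by linarith) (by ring) (by ring)
  have hd12 := Den.i2 (24*u+11*v+18*w) (25*u+11*v+18*w) hd11 (by linarith) (by linarith) (by ring) (by ring)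
  have hd13 := Den.i4 (17*u+8*v+14*w) (18*u+8*v+14*w) hd12 hu hv hw (by linarith) (by ring) (by ring)
  have hd14 := Den.i3 (4*u+2*v+3*w) (5*u+2*v+3*w) hd13 hu hv hw (by linarith) (by linarith) (by ring) (by ring)
  have hd15 := Den.i1 (11*u+5*v+9*w) (12*u+5*v+9*w) hd14 (by linarith) (by ring) (by ring)
  have hd16 := Den.i2 (21*u+10*v+16*w) (22*u+10*v+16*w) hd15 (by linarith) (by linarith) (by ring) (by ring)
  refine ⟨?_, ?_, ?_, ?_⟩
  · exact ((((((((((((((ha0.glue hb0).glue hc0).glue hd0).glue hc12).glue hd9).glue hc9).glue hb9).glue ha6).glue hd14).glue hc17).glue hd5).glue hc5).glue hb5).glue ha2)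
  · exact ((((((((hb2.glue hc2).glue hd2).glue hc14).glue hd11).glue ha3).glue hb6).glue hc6).glue hd6)
  · exact ((((hc18.glue hd15).glue ha7).glue hb10).glue hc10)
  · exact ((((((((((((((hd10.glue hc13).glue hd1).glue hc1).glue hb1).glue ha1).glue hb4).glue hc4).glue hd4).glue hc16).glue hd13).glue ha5).glue hb8).glue hc8).glue hd8)
end

section
variable {u v w η : ℝ}

theorem conj_step (hu : 0 < u) (hv : 0 < v) (hw : 0 < w) (hη : 0 < η)
    (hA : 7*u+3*v+5*w = η*u) (hB : 4*u+2*v+3*w = η*v) (hC : 2*u+v+2*w = η*w) (n : ℕ) :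
    ∀ s t : ℝ, 0 ≤ s → s ≤ 2*u+v+w → t ≤ 2*u+v+w → (TF u v w)^[n] (η*s) = η*t →
      Reach u v w s t := by
  induction n using Nat.strong_induction_on with
  | _ n ih =>
  intro s t hs0 hs1 ht hT
  obtain ⟨ren_0, ren_a, ren_1, ren_b, ren_2, ren_c, ren_3, ren_d, ren_4⟩ := ren s hu hv hw
  rcases n with _ | k
  · simp only [Function.iterate_zero, id] at hT
    exact Reach.of_eq (mul_left_cancel₀ hη.ne' hT)
  rw [Function.iterate_succ_apply] at hT
  have htm := mul_le_mul_of_nonneg_left ht hη.le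
  rcases lt_or_ge s u with h1 | h1
  · have h1' := mul_lt_mul_of_pos_left h1 hη
    rw [TF1 (by linarith), show (16*u+7*v+12*w) - η*s = η*(2*u+w-s) by linarith] at hT
    refine Reach.trans ?_ (ih k (by omega) _ t (by linarith) (by linarith) ht hT)
    rcases hs0.eq_or_lt with h0 | h0
    · have := ren_0 h0.symm
      rwa [← h0, sub_zero, h0]
    · exact ren_a h0 h1
  have h1' := mul_le_mul_of_nonneg_left h1 hη.le
  rcases lt_or_ge s (u+v+w) with h2 | h2
  · have h2' := mul_lt_mul_of_pos_left h2 hη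
    rw [TF2 (by linarith) (by linarith)] at hT
    rcases k with _ | k
    · simp only [Function.iterate_zero, id] at hT
      exfalso; linarith
    rw [Function.iterate_succ_apply] at hT
    rcases le_or_gt s (u+v) with h3 | h3
    · have h3' := mul_le_mul_of_nonneg_left h3 hη.le
      rw [TF4 hu hv hw (by linarith),
        show (42*u+19*v+32*w) - ((33*u+15*v+25*w) - η*s) = η*(s+u+w) by linarith] at hT
      refine Reach.trans ?_ (ih k (by omega) _ t (by linarith) (by linarith) ht hT)
      rcases h1.eq_or_lt with h4 | h4
      · exact (ren_1 h4.symm).trans (Reach.of_eq (by linarith))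
      · rcases h3.eq_or_lt with h5 | h5
        · exact (ren_2 h5).trans (Reach.of_eq (by linarith))
        · exact ren_b h4 h5
    · have h3' := mul_lt_mul_of_pos_left h3 hη
      rw [TF3 hu hv hw (by linarith) (by linarith),
        show (22*u+10*v+17*w) - ((33*u+15*v+25*w) - η*s) = η*(s-u-v) by linarith] at hT
      refine Reach.trans ?_ (ih k (by omega) _ t (by linarith) (by linarith) ht hT)
      exact ren_c h3 h2
  · have h2' := mul_le_mul_of_nonneg_left h2 hη.le
    have h6' := mul_le_mul_of_nonneg_left hs1 hη.le
    rw [TF3 hu hv hw (by linarith) (by linarith),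
        show (22*u+10*v+17*w) - η*s = η*(2*u+v+2*w-s) by linarith] at hT
    refine Reach.trans ?_ (ih k (by omega) _ t (by linarith) (by linarith) ht hT)
    rcases h2.eq_or_lt with h4 | h4
    · exact (ren_3 h4.symm).trans (Reach.of_eq (by linarith))
    · rcases hs1.eq_or_lt with h5 | h5
      · exact (ren_4 h5).trans (Reach.of_eq (by linarith))
      · exact ren_d h4 h5

theorem Den.scale (hu : 0 < u) (hv : 0 < v) (hw : 0 < w) (hη : 0 < η)
    (hA : 7*u+3*v+5*w = η*u) (hB : 4*u+2*v+3*w = η*v) (hC : 2*u+v+2*w = η*w)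
    {z s r p q p' q' : ℝ} (hs0 : 0 ≤ s) (hs1 : s ≤ 2*u+v+w) (hz : Reach u v w z s)
    (h : Den u v w (η*s) r p q) (hp : p = η*p') (hq : q = η*q') (hq1 : q' ≤ 2*u+v+w) :
    Den u v w z (r/η) p' q' := by
  intro t ht1 ht2
  subst hp hq
  obtain ⟨x, ⟨k, hk⟩, h1, h2, h3⟩ := h (η*t) (mul_le_mul_of_nonneg_left ht1 hη.le)
    (mul_le_mul_of_nonneg_left ht2 hη.le)
  obtain ⟨x', rfl⟩ : ∃ x', x = η*x' := ⟨x/η, by field_simp⟩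
  have h1' := lt_of_mul_lt_mul_left h1 hη.le
  have h2' := lt_of_mul_lt_mul_left h2 hη.le
  refine ⟨x', hz.trans (conj_step hu hv hw hη hA hB hC k s x' hs0 hs1 (by linarith) hk), h1', h2', ?_⟩
  rw [← mul_sub, abs_mul, abs_of_pos hη] at h3
  rw [le_div_iff₀ hη]; linarith

/-- `r`-density of the orbit of `z` in the four pieces. -/
def DenAll (u v w z r : ℝ) : Prop :=
  Den u v w z r 0 (7*u+3*v+5*w) ∧ Den u v w z r (7*u+3*v+5*w) (11*u+5*v+8*w) ∧
  Den u v w z r (11*u+5*v+8*w) (13*u+6*v+10*w) ∧ Den u v w z r (13*u+6*v+10*w) (20*u+9*v+15*w)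

theorem Den.base {z p q r : ℝ} (h : Hits u v w (Set.Ioo p q) z) (hr : q - p ≤ r) :
    Den u v w z r p q := by
  obtain ⟨x, ⟨h1, h2⟩, h3⟩ := h
  intro t ht1 ht2
  exact ⟨x, h3, h1, h2, abs_le.mpr ⟨by linarith, by linarith⟩⟩

theorem vis_all {s : ℝ} (hu : 0 < u) (hv : 0 < v) (hw : 0 < w) (h0 : 0 ≤ s) (h1 : s ≤ 2*u+v+w) :
    HitsAll u v w s := by
  obtain ⟨vis_0, vis_a, vis_1, vis_b, vis_2, vis_c, vis_3, vis_d, vis_4⟩ := vis s hu hv hw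
  rcases h0.eq_or_lt with h | h
  · exact vis_0 h.symm
  rcases lt_trichotomy s u with h2 | h2 | h2
  · exact vis_a h h2
  · exact vis_1 h2
  rcases lt_trichotomy s (u+v) with h3 | h3 | h3
  · exact vis_b h2 h3
  · exact vis_2 h3
  rcases lt_trichotomy s (u+v+w) with h4 | h4 | h4
  · exact vis_c h3 h4
  · exact vis_3 h4
  rcases h1.eq_or_lt with h5 | h5
  · exact vis_4 h5
  · exact vis_d h4 h5

theorem denAll (hu : 0 < u) (hv : 0 < v) (hw : 0 < w) (hη : 0 < η)
    (hA : 7*u+3*v+5*w = η*u) (hB : 4*u+2*v+3*w = η*v) (hC : 2*u+v+2*w = η*w) (n : ℕ) :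
    ∀ z, 0 ≤ z → z ≤ 26*u+12*v+20*w → DenAll u v w z ((26*u+12*v+20*w) / η^n) := by
  induction n with
  | zero =>
    intro z h0 h1
    obtain ⟨s, ⟨hs0, hs1⟩, hz⟩ := enter_all hu hv hw h0 h1
    obtain ⟨a1, a2, a3, a4⟩ := vis_all hu hv hw hs0 hs1
    rw [pow_zero, div_one]
    exact ⟨.base (a1.of_reach hz) (by linarith), .base (a2.of_reach hz) (by linarith),
      .base (a3.of_reach hz) (by linarith), .base (a4.of_reach hz) (by linarith)⟩
  | succ n ih =>
    intro z h0 h1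
    obtain ⟨s, ⟨hs0, hs1⟩, hz⟩ := enter_all hu hv hw h0 h1
    have h6' := mul_le_mul_of_nonneg_left hs1 hη.le
    obtain ⟨a1, a2, a3, a4⟩ := ih (η*s) (by positivity) (by linarith)
    rw [pow_succ, ← div_div]
    apply den_up hu hv hw
    · exact a1.scale hu hv hw hη hA hB hC hs0 hs1 hz (by linarith) (by linarith) (by linarith)
    · exact a2.scale hu hv hw hη hA hB hC hs0 hs1 hz (by linarith) (by linarith) (by linarith)
    · exact a3.scale hu hv hw hη hA hB hC hs0 hs1 hz (by linarith) (by linarith) (by linarith)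
    · exact a4.scale hu hv hw hη hA hB hC hs0 hs1 hz (by linarith) (by linarith) (by linarith)

theorem TF_dense (hu : 0 < u) (hv : 0 < v) (hw : 0 < w) (hη : 1 < η)
    (hA : 7*u+3*v+5*w = η*u) (hB : 4*u+2*v+3*w = η*v) (hC : 2*u+v+2*w = η*w) (z t : ℝ)
    (h0 : 0 ≤ z) (h1 : z ≤ 26*u+12*v+20*w) (ht0 : 0 ≤ t) (ht1 : t ≤ 26*u+12*v+20*w) :
    t ∈ closure {y | ∃ k : ℕ, (TF u v w)^[k] z = y} := by
  rw [Metric.mem_closure_iff]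
  intro ε hε
  have hlim : Filter.Tendsto (fun n : ℕ => (26*u+12*v+20*w) / η^n) Filter.atTop (nhds 0) :=
    tendsto_const_nhds.div_atTop (tendsto_pow_atTop_atTop_of_one_lt hη)
  obtain ⟨n, hn⟩ := (hlim.eventually_lt_const hε).exists
  obtain ⟨a1, a2, a3, a4⟩ := denAll hu hv hw (by linarith) hA hB hC n z h0 h1
  have a5 := Den.i2 (20*u+9*v+15*w) (22*u+10*v+17*w) a3 (by linarith) (by linarith)
    (by ring) (by ring)
  have a6 := Den.i2 (22*u+10*v+17*w) (26*u+12*v+20*w) a2 (by linarith) (by linarith)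
    (by ring) (by ring)
  have a7 := a1.glue a2 (by linarith) (by linarith)
  have a8 := a7.glue a3 (by linarith) (by linarith)
  have a9 := a8.glue a4 (by linarith) (by linarith)
  have a10 := a9.glue a5 (by linarith) (by linarith)
  have a11 := a10.glue a6 (by linarith) (by linarith)
  obtain ⟨x, hx, -, -, h⟩ := a11 t ht0 ht1
  refine ⟨x, hx, ?_⟩
  rw [dist_comm, Real.dist_eq]
  linarith

end

/-- Theorem 2.1 (minimality part): the 4-IET with flips `T` built from
`λ = Qν` is minimal: every forward orbit is dense in `[0, |λ|]`. -/
theorem T_minimal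
    (η : ℝ) (hη : η ^ 3 - 11 * η ^ 2 + 7 * η - 1 = 0) (hη10 : 10 < η) :
    let l1 : ℝ := (-3 * η ^ 2 + 32 * η - 9) / 4
    let l2 : ℝ := (6 * η ^ 2 - 64 * η + 22) / 4
    let l3 : ℝ := (-2 * η ^ 2 + 22 * η - 12) / 4
    let l4 : ℝ := (5 * η ^ 2 - 54 * η + 25) / 4
    let L : ℝ := l1 + l2 + l3 + l4
    let T : ℝ → ℝ := fun x =>
      if x < l1 then -x + l1 + l3
      else if x < l1 + l2 then -x + l1 + L
      else if x < l1 + l2 + l3 then -x + l1 + l2 + l3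
      else -x + l1 + l3 + L
    ∀ z ∈ Set.Icc (0:ℝ) L,
      Set.Icc (0:ℝ) L ⊆ closure {w | ∃ k : ℕ, T^[k] z = w} := by
  intro l1 l2 l3 l4 L T z hz t ht
  have hpos : 0 < η := by linarith
  have hlow : 10.33 < η := by
    by_contra hc
    push Not at hc
    nlinarith [mul_nonneg (sub_nonneg.mpr hη10.le) (sub_nonneg.mpr hc),
      mul_nonneg (mul_nonneg hpos.le (sub_nonneg.mpr hη10.le)) (sub_nonneg.mpr hc)]
  have hup : η < 10.34 := by
    by_contra hc
    push Not at hc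
    nlinarith [mul_nonneg hpos.le (sub_nonneg.mpr hc),
      mul_nonneg (mul_nonneg hpos.le hpos.le) (sub_nonneg.mpr hc)]
  have ha : 0 < l1 := by simp only [l1]; nlinarith
  have hb : 0 < l4 := by simp only [l4]; nlinarith
  have hc : 0 < l2 - l4 := by simp only [l2, l4]; nlinarith
  obtain ⟨u, hu⟩ : ∃ u, l1 = η*u := ⟨l1/η, by field_simp⟩
  obtain ⟨v, hv⟩ : ∃ v, l4 = η*v := ⟨l4/η, by field_simp⟩
  obtain ⟨w, hw⟩ : ∃ w, l2 - l4 = η*w := ⟨(l2-l4)/η, by field_simp⟩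
  have hu0 : 0 < u := pos_of_mul_pos_right (hu ▸ ha) hpos.le
  have hv0 : 0 < v := pos_of_mul_pos_right (hv ▸ hb) hpos.le
  have hw0 : 0 < w := pos_of_mul_pos_right (hw ▸ hc) hpos.le
  have hA : 7*u+3*v+5*w = η*u := by
    apply mul_left_cancel₀ hpos.ne'
    have : 7*l1+3*l4+5*(l2-l4) = η*l1 := by
      simp only [l1, l2, l4]; linear_combination (3/4)*hη
    rw [hw, hu, hv] at this
    linarith
  have hB : 4*u+2*v+3*w = η*v := by
    apply mul_left_cancel₀ hpos.ne'
    have : 4*l1+2*l4+3*(l2-l4) = η*l4 := by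
      simp only [l1, l2, l4]; linear_combination (-5/4)*hη
    rw [hw, hu, hv] at this
    linarith
  have hC : 2*u+v+2*w = η*w := by
    apply mul_left_cancel₀ hpos.ne'
    have : 2*l1+l4+2*(l2-l4) = η*(l2-l4) := by
      simp only [l1, l2, l4]; linear_combination (-1/4)*hη
    rw [hw, hu, hv] at this
    linarith
  have e1 : l1 = 7*u+3*v+5*w := by linarith
  have e4 : l4 = 4*u+2*v+3*w := by linarith
  have e2 : l2 = 6*u+3*v+5*w := by linarith
  have e3 : l3 = 9*u+4*v+7*w := by
    have : l3 = l1 + l2 - l4 := by simp only [l1, l2, l3, l4]; ring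
    linarith
  have eL : L = 26*u+12*v+20*w := by
    have : L = l1 + l2 + l3 + l4 := rfl
    linarith
  have eT : T = TF u v w := by
    funext x
    have : T x = if x < l1 then -x + l1 + l3
      else if x < l1 + l2 then -x + l1 + L
      else if x < l1 + l2 + l3 then -x + l1 + l2 + l3
      else -x + l1 + l3 + L := rfl
    rw [this, TF, eL, e1, e2, e3]
    clear_value l1 l2 l3 l4 L T
    rw [show 7*u+3*v+5*w + (6*u+3*v+5*w) + (9*u+4*v+7*w) = 22*u+10*v+17*w by ring,
      show 7*u+3*v+5*w + (6*u+3*v+5*w) = 13*u+6*v+10*w by ring]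
    split_ifs <;> ring
  rw [eT]
  rw [eL] at hz ht
  exact TF_dense hu0 hv0 hw0 (by linarith) hA hB hC z t hz.1 hz.2 ht.1 ht.2
end

section
/- The 4-IET with flips T defined from λ = Qν is uniquely ergodic: the normalized Lebesgue measure on [0,|λ|] is the only T-invariant Borel probability measure. -/
open MeasureTheory

/-- The distribution-function equations of the induced 4-interval exchange with lengths
`a, b, c, a` (flips on the first and the last interval), with masses `α, β, γ, δ`. -/
structure Sol (a b c α β γ δ : ℝ) (F : ℝ → ℝ) : Prop where
  z : F 0 = 0
  ha : F a = α
  hb : F (a + b) = α + β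
  hc : F (a + b + c) = α + β + γ
  hd : F (2 * a + b + c) = α + β + γ + δ
  A : ∀ x y, 0 ≤ x → x ≤ a → x + y = 2 * a + c → F x + F y = α + γ + δ
  B : ∀ x y, a ≤ x → x ≤ a + b → y = x + a + c → F y = F x + γ + δ
  C : ∀ x y, a + b ≤ x → x ≤ a + b + c → y = x - a - b → F y = F x - α - β
  D : ∀ x y, a + b + c ≤ x → x ≤ 2 * a + b + c → x + y = 2 * a + b + 2 * c →
    F x + F y = α + β + 2 * γ + δ

/-- Monotonicity of a function along the same exchange, restricted to open intervals. -/
structure OSol (a b c : ℝ) (m : ℝ → ℝ) : Prop where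
  A : ∀ x y, 0 < x → x < a → x + y = 2 * a + c → m x ≤ m y
  B : ∀ x y, a < x → x < a + b → y = x + a + c → m x ≤ m y
  C : ∀ x y, a + b < x → x < a + b + c → y = x - a - b → m x ≤ m y
  D : ∀ x y, a + b + c < x → x < 2 * a + b + c → x + y = 2 * a + b + 2 * c → m x ≤ m y

theorem Sol.breaks {p q r α β γ δ : ℝ} {F : ℝ → ℝ} (hp : 0 < p) (hq : 0 < q) (hr : 0 < r)
    (S : Sol (7 * p + 3 * q + 5 * r) (4 * p + 2 * q + 3 * r) (2 * p + q + 2 * r) α β γ δ F) :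
    ∃ α' β' γ' δ' : ℝ, F p = α' ∧ F (p + q) = α' + β' ∧ F (p + q + r) = α' + β' + γ' ∧
      F (2 * p + q + r) = α' + β' + γ' + δ' ∧
      α = 3 * α' + 3 * β' + 5 * γ' + 4 * δ' ∧ β = α' + 2 * β' + 3 * γ' + 3 * δ' ∧
      γ = α' + β' + 2 * γ' + δ' ∧ δ = 2 * α' + 3 * β' + 5 * γ' + 5 * δ' := by
  have e1 : F (7*p + 3*q + 5*r) = α := by rw [← S.ha]
  have e2 : F (11*p + 5*q + 8*r) = α + β := by rw [← S.hb]; congr 1; ring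
  have e3 : F (13*p + 6*q + 10*r) = α + β + γ := by rw [← S.hc]; congr 1; ring
  have v_p : F (p) = (1)*α + (-1)*β + (-1)*γ + (0)*δ := by
    have h0 := S.A (p) (15*p + 7*q + 12*r) (by linarith) (by linarith) (by linarith)
    have h1 := S.D (15*p + 7*q + 12*r) (7*p + 3*q + 5*r) (by linarith) (by linarith) (by linarith)
    linarith
  have v_pq : F (p + q) = (2)*α + (3)*β + (-2)*γ + (-3)*δ := by
    have h0 := S.A (p + q) (15*p + 6*q + 12*r) (by linarith) (by linarith) (by linarith)
    have h1 := S.D (15*p + 6*q + 12*r) (7*p + 4*q + 5*r) (by linarith) (by linarith) (by linarith)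
    have h2 := S.B (7*p + 4*q + 5*r) (16*p + 8*q + 12*r) (by linarith) (by linarith) (by linarith)
    have h3 := S.D (16*p + 8*q + 12*r) (6*p + 2*q + 5*r) (by linarith) (by linarith) (by linarith)
    have h4 := S.A (6*p + 2*q + 5*r) (10*p + 5*q + 7*r) (by linarith) (by linarith) (by linarith)
    have h5 := S.B (10*p + 5*q + 7*r) (19*p + 9*q + 14*r) (by linarith) (by linarith) (by linarith)
    have h6 := S.D (19*p + 9*q + 14*r) (3*p + q + 3*r) (by linarith) (by linarith) (by linarith)
    have h7 := S.A (3*p + q + 3*r) (13*p + 6*q + 9*r) (by linarith) (by linarith) (by linarith)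
    have h8 := S.C (13*p + 6*q + 9*r) (2*p + q + r) (by linarith) (by linarith) (by linarith)
    have h9 := S.A (2*p + q + r) (14*p + 6*q + 11*r) (by linarith) (by linarith) (by linarith)
    have h10 := S.D (14*p + 6*q + 11*r) (8*p + 4*q + 6*r) (by linarith) (by linarith) (by linarith)
    have h11 := S.B (8*p + 4*q + 6*r) (17*p + 8*q + 13*r) (by linarith) (by linarith) (by linarith)
    have h12 := S.D (17*p + 8*q + 13*r) (5*p + 2*q + 4*r) (by linarith) (by linarith) (by linarith)
    have h13 := S.A (5*p + 2*q + 4*r) (11*p + 5*q + 8*r) (by linarith) (by linarith) (by linarith)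
    linarith
  have v_pqr : F (p + q + r) = (1)*α + (2)*β + (0)*γ + (-2)*δ := by
    have h0 := S.A (p + q + r) (15*p + 6*q + 11*r) (by linarith) (by linarith) (by linarith)
    have h1 := S.D (15*p + 6*q + 11*r) (7*p + 4*q + 6*r) (by linarith) (by linarith) (by linarith)
    have h2 := S.B (7*p + 4*q + 6*r) (16*p + 8*q + 13*r) (by linarith) (by linarith) (by linarith)
    have h3 := S.D (16*p + 8*q + 13*r) (6*p + 2*q + 4*r) (by linarith) (by linarith) (by linarith)
    have h4 := S.A (6*p + 2*q + 4*r) (10*p + 5*q + 8*r) (by linarith) (by linarith) (by linarith)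
    have h5 := S.B (10*p + 5*q + 8*r) (19*p + 9*q + 15*r) (by linarith) (by linarith) (by linarith)
    have h6 := S.D (19*p + 9*q + 15*r) (3*p + q + 2*r) (by linarith) (by linarith) (by linarith)
    have h7 := S.A (3*p + q + 2*r) (13*p + 6*q + 10*r) (by linarith) (by linarith) (by linarith)
    linarith
  have v_th : F (2*p + q + r) = (1)*α + (1)*β + (-1)*γ + (-1)*δ := by
    have h0 := S.A (2*p + q + r) (14*p + 6*q + 11*r) (by linarith) (by linarith) (by linarith)
    have h1 := S.D (14*p + 6*q + 11*r) (8*p + 4*q + 6*r) (by linarith) (by linarith) (by linarith)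
    have h2 := S.B (8*p + 4*q + 6*r) (17*p + 8*q + 13*r) (by linarith) (by linarith) (by linarith)
    have h3 := S.D (17*p + 8*q + 13*r) (5*p + 2*q + 4*r) (by linarith) (by linarith) (by linarith)
    have h4 := S.A (5*p + 2*q + 4*r) (11*p + 5*q + 8*r) (by linarith) (by linarith) (by linarith)
    linarith
  refine ⟨F p, F (p + q) - F p, F (p + q + r) - F (p + q), F (2 * p + q + r) - F (p + q + r),
    rfl, by ring, by ring, by ring, ?_, ?_, ?_, ?_⟩ <;> linarith

theorem Sol.renorm {p q r α β γ δ : ℝ} {F : ℝ → ℝ} (hp : 0 < p) (hq : 0 < q) (hr : 0 < r)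
    (S : Sol (7 * p + 3 * q + 5 * r) (4 * p + 2 * q + 3 * r) (2 * p + q + 2 * r) α β γ δ F) :
    ∃ α' β' γ' δ' : ℝ, Sol p q r α' β' γ' δ' F ∧
      α = 3 * α' + 3 * β' + 5 * γ' + 4 * δ' ∧ β = α' + 2 * β' + 3 * γ' + 3 * δ' ∧
      γ = α' + β' + 2 * γ' + δ' ∧ δ = 2 * α' + 3 * β' + 5 * γ' + 5 * δ' := by
  obtain ⟨α', β', γ', δ', f1, f2, f3, f4, r1, r2, r3, r4⟩ := S.breaks hp hq hr
  refine ⟨α', β', γ', δ', ⟨S.z, f1, f2, f3, f4, ?_, ?_, ?_, ?_⟩, r1, r2, r3, r4⟩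
  · intro x y hx1 hx2 hxy
    have h0 := S.A (x) (16*p + 7*q + 12*r - x) (by linarith) (by linarith) (by linarith)
    have h1 := S.D (16*p + 7*q + 12*r - x) (6*p + 3*q + 5*r + x) (by linarith) (by linarith) (by linarith)
    have h2 := S.A (6*p + 3*q + 5*r + x) (10*p + 4*q + 7*r - x) (by linarith) (by linarith) (by linarith)
    have h3 := S.B (10*p + 4*q + 7*r - x) (19*p + 8*q + 14*r - x) (by linarith) (by linarith) (by linarith)
    have h4 := S.D (19*p + 8*q + 14*r - x) (3*p + 2*q + 3*r + x) (by linarith) (by linarith) (by linarith)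
    have h5 := S.A (3*p + 2*q + 3*r + x) (13*p + 5*q + 9*r - x) (by linarith) (by linarith) (by linarith)
    have h6 := S.C (13*p + 5*q + 9*r - x) (2*p + r - x) (by linarith) (by linarith) (by linarith)
    have hy : y = 2*p + r - x := by linarith
    rw [hy]; linarith
  · intro x y hx1 hx2 hxy
    have h0 := S.A (x) (16*p + 7*q + 12*r - x) (by linarith) (by linarith) (by linarith)
    have h1 := S.D (16*p + 7*q + 12*r - x) (6*p + 3*q + 5*r + x) (by linarith) (by linarith) (by linarith)
    have h2 := S.B (6*p + 3*q + 5*r + x) (15*p + 7*q + 12*r + x) (by linarith) (by linarith) (by linarith)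
    have h3 := S.D (15*p + 7*q + 12*r + x) (7*p + 3*q + 5*r - x) (by linarith) (by linarith) (by linarith)
    have h4 := S.A (7*p + 3*q + 5*r - x) (9*p + 4*q + 7*r + x) (by linarith) (by linarith) (by linarith)
    have h5 := S.B (9*p + 4*q + 7*r + x) (18*p + 8*q + 14*r + x) (by linarith) (by linarith) (by linarith)
    have h6 := S.D (18*p + 8*q + 14*r + x) (4*p + 2*q + 3*r - x) (by linarith) (by linarith) (by linarith)
    have h7 := S.A (4*p + 2*q + 3*r - x) (12*p + 5*q + 9*r + x) (by linarith) (by linarith) (by linarith)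
    have h8 := S.C (12*p + 5*q + 9*r + x) (p + r + x) (by linarith) (by linarith) (by linarith)
    have hy : y = p + r + x := by linarith
    rw [hy]; linarith
  · intro x y hx1 hx2 hxy
    have h0 := S.A (x) (16*p + 7*q + 12*r - x) (by linarith) (by linarith) (by linarith)
    have h1 := S.D (16*p + 7*q + 12*r - x) (6*p + 3*q + 5*r + x) (by linarith) (by linarith) (by linarith)
    have h2 := S.B (6*p + 3*q + 5*r + x) (15*p + 7*q + 12*r + x) (by linarith) (by linarith) (by linarith)
    have h3 := S.D (15*p + 7*q + 12*r + x) (7*p + 3*q + 5*r - x) (by linarith) (by linarith) (by linarith)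
    have h4 := S.A (7*p + 3*q + 5*r - x) (9*p + 4*q + 7*r + x) (by linarith) (by linarith) (by linarith)
    have h5 := S.B (9*p + 4*q + 7*r + x) (18*p + 8*q + 14*r + x) (by linarith) (by linarith) (by linarith)
    have h6 := S.D (18*p + 8*q + 14*r + x) (4*p + 2*q + 3*r - x) (by linarith) (by linarith) (by linarith)
    have h7 := S.A (4*p + 2*q + 3*r - x) (12*p + 5*q + 9*r + x) (by linarith) (by linarith) (by linarith)
    have h8 := S.C (12*p + 5*q + 9*r + x) (p + r + x) (by linarith) (by linarith) (by linarith)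
    have h9 := S.A (p + r + x) (15*p + 7*q + 11*r - x) (by linarith) (by linarith) (by linarith)
    have h10 := S.D (15*p + 7*q + 11*r - x) (7*p + 3*q + 6*r + x) (by linarith) (by linarith) (by linarith)
    have h11 := S.B (7*p + 3*q + 6*r + x) (16*p + 7*q + 13*r + x) (by linarith) (by linarith) (by linarith)
    have h12 := S.D (16*p + 7*q + 13*r + x) (6*p + 3*q + 4*r - x) (by linarith) (by linarith) (by linarith)
    have h13 := S.A (6*p + 3*q + 4*r - x) (10*p + 4*q + 8*r + x) (by linarith) (by linarith) (by linarith)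
    have h14 := S.C (10*p + 4*q + 8*r + x) (-p - q + x) (by linarith) (by linarith) (by linarith)
    have hy : y = -p - q + x := by linarith
    rw [hy]; linarith
  · intro x y hx1 hx2 hxy
    have h0 := S.A (x) (16*p + 7*q + 12*r - x) (by linarith) (by linarith) (by linarith)
    have h1 := S.D (16*p + 7*q + 12*r - x) (6*p + 3*q + 5*r + x) (by linarith) (by linarith) (by linarith)
    have h2 := S.B (6*p + 3*q + 5*r + x) (15*p + 7*q + 12*r + x) (by linarith) (by linarith) (by linarith)
    have h3 := S.D (15*p + 7*q + 12*r + x) (7*p + 3*q + 5*r - x) (by linarith) (by linarith) (by linarith)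
    have h4 := S.A (7*p + 3*q + 5*r - x) (9*p + 4*q + 7*r + x) (by linarith) (by linarith) (by linarith)
    have h5 := S.B (9*p + 4*q + 7*r + x) (18*p + 8*q + 14*r + x) (by linarith) (by linarith) (by linarith)
    have h6 := S.D (18*p + 8*q + 14*r + x) (4*p + 2*q + 3*r - x) (by linarith) (by linarith) (by linarith)
    have h7 := S.A (4*p + 2*q + 3*r - x) (12*p + 5*q + 9*r + x) (by linarith) (by linarith) (by linarith)
    have h8 := S.D (12*p + 5*q + 9*r + x) (10*p + 5*q + 8*r - x) (by linarith) (by linarith) (by linarith)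
    have h9 := S.B (10*p + 5*q + 8*r - x) (19*p + 9*q + 15*r - x) (by linarith) (by linarith) (by linarith)
    have h10 := S.D (19*p + 9*q + 15*r - x) (3*p + q + 2*r + x) (by linarith) (by linarith) (by linarith)
    have h11 := S.A (3*p + q + 2*r + x) (13*p + 6*q + 10*r - x) (by linarith) (by linarith) (by linarith)
    have h12 := S.C (13*p + 6*q + 10*r - x) (2*p + q + 2*r - x) (by linarith) (by linarith) (by linarith)
    have hy : y = 2*p + q + 2*r - x := by linarith
    rw [hy]; linarith

theorem OSol.renorm {p q r : ℝ} {m : ℝ → ℝ} (hp : 0 < p) (hq : 0 < q) (hr : 0 < r)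
    (S : OSol (7 * p + 3 * q + 5 * r) (4 * p + 2 * q + 3 * r) (2 * p + q + 2 * r) m) : OSol p q r m := by
  refine ⟨?_, ?_, ?_, ?_⟩
  · intro x y hx1 hx2 hxy
    have h0 := S.A (x) (16*p + 7*q + 12*r - x) (by linarith) (by linarith) (by linarith)
    have h1 := S.D (16*p + 7*q + 12*r - x) (6*p + 3*q + 5*r + x) (by linarith) (by linarith) (by linarith)
    have h2 := S.A (6*p + 3*q + 5*r + x) (10*p + 4*q + 7*r - x) (by linarith) (by linarith) (by linarith)
    have h3 := S.B (10*p + 4*q + 7*r - x) (19*p + 8*q + 14*r - x) (by linarith) (by linarith) (by linarith)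
    have h4 := S.D (19*p + 8*q + 14*r - x) (3*p + 2*q + 3*r + x) (by linarith) (by linarith) (by linarith)
    have h5 := S.A (3*p + 2*q + 3*r + x) (13*p + 5*q + 9*r - x) (by linarith) (by linarith) (by linarith)
    have h6 := S.C (13*p + 5*q + 9*r - x) (2*p + r - x) (by linarith) (by linarith) (by linarith)
    have hy : y = 2*p + r - x := by linarith
    rw [hy]; linarith
  · intro x y hx1 hx2 hxy
    have h0 := S.A (x) (16*p + 7*q + 12*r - x) (by linarith) (by linarith) (by linarith)
    have h1 := S.D (16*p + 7*q + 12*r - x) (6*p + 3*q + 5*r + x) (by linarith) (by linarith) (by linarith)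
    have h2 := S.B (6*p + 3*q + 5*r + x) (15*p + 7*q + 12*r + x) (by linarith) (by linarith) (by linarith)
    have h3 := S.D (15*p + 7*q + 12*r + x) (7*p + 3*q + 5*r - x) (by linarith) (by linarith) (by linarith)
    have h4 := S.A (7*p + 3*q + 5*r - x) (9*p + 4*q + 7*r + x) (by linarith) (by linarith) (by linarith)
    have h5 := S.B (9*p + 4*q + 7*r + x) (18*p + 8*q + 14*r + x) (by linarith) (by linarith) (by linarith)
    have h6 := S.D (18*p + 8*q + 14*r + x) (4*p + 2*q + 3*r - x) (by linarith) (by linarith) (by linarith)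
    have h7 := S.A (4*p + 2*q + 3*r - x) (12*p + 5*q + 9*r + x) (by linarith) (by linarith) (by linarith)
    have h8 := S.C (12*p + 5*q + 9*r + x) (p + r + x) (by linarith) (by linarith) (by linarith)
    have hy : y = p + r + x := by linarith
    rw [hy]; linarith
  · intro x y hx1 hx2 hxy
    have h0 := S.A (x) (16*p + 7*q + 12*r - x) (by linarith) (by linarith) (by linarith)
    have h1 := S.D (16*p + 7*q + 12*r - x) (6*p + 3*q + 5*r + x) (by linarith) (by linarith) (by linarith)
    have h2 := S.B (6*p + 3*q + 5*r + x) (15*p + 7*q + 12*r + x) (by linarith) (by linarith) (by linarith)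
    have h3 := S.D (15*p + 7*q + 12*r + x) (7*p + 3*q + 5*r - x) (by linarith) (by linarith) (by linarith)
    have h4 := S.A (7*p + 3*q + 5*r - x) (9*p + 4*q + 7*r + x) (by linarith) (by linarith) (by linarith)
    have h5 := S.B (9*p + 4*q + 7*r + x) (18*p + 8*q + 14*r + x) (by linarith) (by linarith) (by linarith)
    have h6 := S.D (18*p + 8*q + 14*r + x) (4*p + 2*q + 3*r - x) (by linarith) (by linarith) (by linarith)
    have h7 := S.A (4*p + 2*q + 3*r - x) (12*p + 5*q + 9*r + x) (by linarith) (by linarith) (by linarith)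
    have h8 := S.C (12*p + 5*q + 9*r + x) (p + r + x) (by linarith) (by linarith) (by linarith)
    have h9 := S.A (p + r + x) (15*p + 7*q + 11*r - x) (by linarith) (by linarith) (by linarith)
    have h10 := S.D (15*p + 7*q + 11*r - x) (7*p + 3*q + 6*r + x) (by linarith) (by linarith) (by linarith)
    have h11 := S.B (7*p + 3*q + 6*r + x) (16*p + 7*q + 13*r + x) (by linarith) (by linarith) (by linarith)
    have h12 := S.D (16*p + 7*q + 13*r + x) (6*p + 3*q + 4*r - x) (by linarith) (by linarith) (by linarith)
    have h13 := S.A (6*p + 3*q + 4*r - x) (10*p + 4*q + 8*r + x) (by linarith) (by linarith) (by linarith)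
    have h14 := S.C (10*p + 4*q + 8*r + x) (-p - q + x) (by linarith) (by linarith) (by linarith)
    have hy : y = -p - q + x := by linarith
    rw [hy]; linarith
  · intro x y hx1 hx2 hxy
    have h0 := S.A (x) (16*p + 7*q + 12*r - x) (by linarith) (by linarith) (by linarith)
    have h1 := S.D (16*p + 7*q + 12*r - x) (6*p + 3*q + 5*r + x) (by linarith) (by linarith) (by linarith)
    have h2 := S.B (6*p + 3*q + 5*r + x) (15*p + 7*q + 12*r + x) (by linarith) (by linarith) (by linarith)
    have h3 := S.D (15*p + 7*q + 12*r + x) (7*p + 3*q + 5*r - x) (by linarith) (by linarith) (by linarith)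
    have h4 := S.A (7*p + 3*q + 5*r - x) (9*p + 4*q + 7*r + x) (by linarith) (by linarith) (by linarith)
    have h5 := S.B (9*p + 4*q + 7*r + x) (18*p + 8*q + 14*r + x) (by linarith) (by linarith) (by linarith)
    have h6 := S.D (18*p + 8*q + 14*r + x) (4*p + 2*q + 3*r - x) (by linarith) (by linarith) (by linarith)
    have h7 := S.A (4*p + 2*q + 3*r - x) (12*p + 5*q + 9*r + x) (by linarith) (by linarith) (by linarith)
    have h8 := S.D (12*p + 5*q + 9*r + x) (10*p + 5*q + 8*r - x) (by linarith) (by linarith) (by linarith)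
    have h9 := S.B (10*p + 5*q + 8*r - x) (19*p + 9*q + 15*r - x) (by linarith) (by linarith) (by linarith)
    have h10 := S.D (19*p + 9*q + 15*r - x) (3*p + q + 2*r + x) (by linarith) (by linarith) (by linarith)
    have h11 := S.A (3*p + q + 2*r + x) (13*p + 6*q + 10*r - x) (by linarith) (by linarith) (by linarith)
    have h12 := S.C (13*p + 6*q + 10*r - x) (2*p + q + 2*r - x) (by linarith) (by linarith) (by linarith)
    have hy : y = 2*p + q + 2*r - x := by linarith
    rw [hy]; linarith

theorem OSol.step_c {p q r : ℝ} {m : ℝ → ℝ} (hp : 0 < p) (hq : 0 < q) (hr : 0 < r)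
    (S : OSol (7 * p + 3 * q + 5 * r) (4 * p + 2 * q + 3 * r) (2 * p + q + 2 * r) m) : m (2*p + q + 2*r) ≤ m (r) := by
  have h0 := S.A (2*p + q + 2*r) (14*p + 6*q + 10*r) (by linarith) (by linarith) (by linarith)
  have h1 := S.D (14*p + 6*q + 10*r) (8*p + 4*q + 7*r) (by linarith) (by linarith) (by linarith)
  have h2 := S.B (8*p + 4*q + 7*r) (17*p + 8*q + 14*r) (by linarith) (by linarith) (by linarith)
  have h3 := S.D (17*p + 8*q + 14*r) (5*p + 2*q + 3*r) (by linarith) (by linarith) (by linarith)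
  have h4 := S.A (5*p + 2*q + 3*r) (11*p + 5*q + 9*r) (by linarith) (by linarith) (by linarith)
  have h5 := S.C (11*p + 5*q + 9*r) (r) (by linarith) (by linarith) (by linarith)
  linarith

theorem OSol.step_ac {p q r : ℝ} {m : ℝ → ℝ} (hp : 0 < p) (hq : 0 < q) (hr : 0 < r)
    (S : OSol (7 * p + 3 * q + 5 * r) (4 * p + 2 * q + 3 * r) (2 * p + q + 2 * r) m) : m (9*p + 4*q + 7*r) ≤ m (p + r) := by
  have h0 := S.B (9*p + 4*q + 7*r) (18*p + 8*q + 14*r) (by linarith) (by linarith) (by linarith)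
  have h1 := S.D (18*p + 8*q + 14*r) (4*p + 2*q + 3*r) (by linarith) (by linarith) (by linarith)
  have h2 := S.A (4*p + 2*q + 3*r) (12*p + 5*q + 9*r) (by linarith) (by linarith) (by linarith)
  have h3 := S.C (12*p + 5*q + 9*r) (p + r) (by linarith) (by linarith) (by linarith)
  linarith

theorem OSol.step_aac {p q r : ℝ} {m : ℝ → ℝ} (hp : 0 < p) (hq : 0 < q) (hr : 0 < r)
    (S : OSol (7 * p + 3 * q + 5 * r) (4 * p + 2 * q + 3 * r) (2 * p + q + 2 * r) m) : m (16*p + 7*q + 12*r) ≤ m (2*p + r) := by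
  have h0 := S.D (16*p + 7*q + 12*r) (6*p + 3*q + 5*r) (by linarith) (by linarith) (by linarith)
  have h1 := S.A (6*p + 3*q + 5*r) (10*p + 4*q + 7*r) (by linarith) (by linarith) (by linarith)
  have h2 := S.B (10*p + 4*q + 7*r) (19*p + 8*q + 14*r) (by linarith) (by linarith) (by linarith)
  have h3 := S.D (19*p + 8*q + 14*r) (3*p + 2*q + 3*r) (by linarith) (by linarith) (by linarith)
  have h4 := S.A (3*p + 2*q + 3*r) (13*p + 5*q + 9*r) (by linarith) (by linarith) (by linarith)
  have h5 := S.C (13*p + 5*q + 9*r) (2*p + r) (by linarith) (by linarith) (by linarith)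
  linarith

theorem Sol.cover {p q r K : ℝ} {F : ℝ → ℝ} (hp : 0 < p) (hq : 0 < q) (hr : 0 < r)
    (S : Sol (7 * p + 3 * q + 5 * r) (4 * p + 2 * q + 3 * r) (2 * p + q + 2 * r) 0 0 0 0 F)
    (k0 : ∀ x, 0 ≤ x → x ≤ 2*p + q + r → |F x| ≤ K) :
    ∀ x, 0 ≤ x → x ≤ 20*p + 9*q + 15*r → |F x| ≤ K := by
  have SA : ∀ x, 0 ≤ x → x ≤ 7*p + 3*q + 5*r → |F (16*p + 7*q + 12*r - x)| = |F x| := by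
    intro x h1 h2
    have h := S.A x (16*p + 7*q + 12*r - x) (by linarith) (by linarith) (by linarith)
    rw [show F (16*p + 7*q + 12*r - x) = - F x by linarith, abs_neg]
  have SB : ∀ x, 7*p + 3*q + 5*r ≤ x → x ≤ 11*p + 5*q + 8*r → |F (9*p + 4*q + 7*r + x)| = |F x| := by
    intro x h1 h2
    have h := S.B x (9*p + 4*q + 7*r + x) (by linarith) (by linarith) (by linarith)
    rw [show F (9*p + 4*q + 7*r + x) = F x by linarith]
  have SC : ∀ x, 11*p + 5*q + 8*r ≤ x → x ≤ 13*p + 6*q + 10*r → |F (-11*p - 5*q - 8*r + x)| = |F x| := by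
    intro x h1 h2
    have h := S.C x (-11*p - 5*q - 8*r + x) (by linarith) (by linarith) (by linarith)
    rw [show F (-11*p - 5*q - 8*r + x) = F x by linarith]
  have SD : ∀ x, 13*p + 6*q + 10*r ≤ x → x ≤ 20*p + 9*q + 15*r → |F (22*p + 10*q + 17*r - x)| = |F x| := by
    intro x h1 h2
    have h := S.D x (22*p + 10*q + 17*r - x) (by linarith) (by linarith) (by linarith)
    rw [show F (22*p + 10*q + 17*r - x) = - F x by linarith, abs_neg]
  have k1 : ∀ x, 11*p + 5*q + 8*r ≤ x → x ≤ 13*p + 6*q + 9*r → |F x| ≤ K := fun x h1 h2 => by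
    rw [← SC x (by linarith) (by linarith)]; exact k0 _ (by linarith) (by linarith)
  have k2 : ∀ x, 3*p + q + 3*r ≤ x → x ≤ 5*p + 2*q + 4*r → |F x| ≤ K := fun x h1 h2 => by
    rw [← SA x (by linarith) (by linarith)]; exact k1 _ (by linarith) (by linarith)
  have k3 : ∀ x, 17*p + 8*q + 13*r ≤ x → x ≤ 19*p + 9*q + 14*r → |F x| ≤ K := fun x h1 h2 => by
    rw [← SD x (by linarith) (by linarith)]; exact k2 _ (by linarith) (by linarith)
  have k4 : ∀ x, 8*p + 4*q + 6*r ≤ x → x ≤ 10*p + 5*q + 7*r → |F x| ≤ K := fun x h1 h2 => by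
    rw [← SB x (by linarith) (by linarith)]; exact k3 _ (by linarith) (by linarith)
  have k5 : ∀ x, 6*p + 2*q + 5*r ≤ x → x ≤ 7*p + 3*q + 5*r → |F x| ≤ K := fun x h1 h2 => by
    rw [← SA x (by linarith) (by linarith)]; exact k4 _ (by linarith) (by linarith)
  have k6 : ∀ x, 13*p + 6*q + 10*r ≤ x → x ≤ 14*p + 6*q + 11*r → |F x| ≤ K := fun x h1 h2 => by
    rw [← SD x (by linarith) (by linarith)]; exact k4 _ (by linarith) (by linarith)
  have k7 : ∀ x, 2*p + q + r ≤ x → x ≤ 3*p + q + 2*r → |F x| ≤ K := fun x h1 h2 => by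
    rw [← SA x (by linarith) (by linarith)]; exact k6 _ (by linarith) (by linarith)
  have k8 : ∀ x, 15*p + 7*q + 12*r ≤ x → x ≤ 16*p + 8*q + 12*r → |F x| ≤ K := fun x h1 h2 => by
    rw [← SD x (by linarith) (by linarith)]; exact k5 _ (by linarith) (by linarith)
  have k9 : ∀ x, 0 ≤ x → x ≤ 3*p + q + 2*r → |F x| ≤ K := fun x h1 h2 => by
    rcases le_total x (2*p + q + r) with h | h
    · exact k0 _ (by linarith) (by linarith)
    · exact k7 _ (by linarith) (by linarith)
  have k10 : ∀ x, 7*p + 3*q + 5*r ≤ x → x ≤ 7*p + 4*q + 5*r → |F x| ≤ K := fun x h1 h2 => by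
    rw [← SB x (by linarith) (by linarith)]; exact k8 _ (by linarith) (by linarith)
  have k11 : ∀ x, 11*p + 5*q + 8*r ≤ x → x ≤ 13*p + 6*q + 10*r → |F x| ≤ K := fun x h1 h2 => by
    rw [← SC x (by linarith) (by linarith)]; exact k9 _ (by linarith) (by linarith)
  have k12 : ∀ x, 19*p + 9*q + 15*r ≤ x → x ≤ 20*p + 9*q + 15*r → |F x| ≤ K := fun x h1 h2 => by
    rw [← SD x (by linarith) (by linarith)]; exact k9 _ (by linarith) (by linarith)
  have k13 : ∀ x, 6*p + 2*q + 5*r ≤ x → x ≤ 7*p + 4*q + 5*r → |F x| ≤ K := fun x h1 h2 => by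
    rcases le_total x (7*p + 3*q + 5*r) with h | h
    · exact k5 _ (by linarith) (by linarith)
    · exact k10 _ (by linarith) (by linarith)
  have k14 : ∀ x, 11*p + 5*q + 8*r ≤ x → x ≤ 14*p + 6*q + 11*r → |F x| ≤ K := fun x h1 h2 => by
    rcases le_total x (13*p + 6*q + 10*r) with h | h
    · exact k11 _ (by linarith) (by linarith)
    · exact k6 _ (by linarith) (by linarith)
  have k15 : ∀ x, 2*p + q + r ≤ x → x ≤ 5*p + 2*q + 4*r → |F x| ≤ K := fun x h1 h2 => by
    rw [← SA x (by linarith) (by linarith)]; exact k14 _ (by linarith) (by linarith)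
  have k16 : ∀ x, 10*p + 5*q + 8*r ≤ x → x ≤ 11*p + 5*q + 8*r → |F x| ≤ K := fun x h1 h2 => by
    rw [← SB x (by linarith) (by linarith)]; exact k12 _ (by linarith) (by linarith)
  have k17 : ∀ x, 15*p + 6*q + 12*r ≤ x → x ≤ 16*p + 8*q + 12*r → |F x| ≤ K := fun x h1 h2 => by
    rw [← SD x (by linarith) (by linarith)]; exact k13 _ (by linarith) (by linarith)
  have k18 : ∀ x, 0 ≤ x → x ≤ 5*p + 2*q + 4*r → |F x| ≤ K := fun x h1 h2 => by
    rcases le_total x (3*p + q + 2*r) with h | h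
    · exact k9 _ (by linarith) (by linarith)
    · exact k15 _ (by linarith) (by linarith)
  have k19 : ∀ x, 10*p + 5*q + 8*r ≤ x → x ≤ 14*p + 6*q + 11*r → |F x| ≤ K := fun x h1 h2 => by
    rcases le_total x (11*p + 5*q + 8*r) with h | h
    · exact k16 _ (by linarith) (by linarith)
    · exact k14 _ (by linarith) (by linarith)
  have k20 : ∀ x, 2*p + q + r ≤ x → x ≤ 6*p + 2*q + 4*r → |F x| ≤ K := fun x h1 h2 => by
    rw [← SA x (by linarith) (by linarith)]; exact k19 _ (by linarith) (by linarith)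
  have k21 : ∀ x, 17*p + 8*q + 13*r ≤ x → x ≤ 20*p + 9*q + 15*r → |F x| ≤ K := fun x h1 h2 => by
    rw [← SD x (by linarith) (by linarith)]; exact k18 _ (by linarith) (by linarith)
  have k22 : ∀ x, 0 ≤ x → x ≤ 6*p + 2*q + 4*r → |F x| ≤ K := fun x h1 h2 => by
    rcases le_total x (5*p + 2*q + 4*r) with h | h
    · exact k18 _ (by linarith) (by linarith)
    · exact k20 _ (by linarith) (by linarith)
  have k23 : ∀ x, 8*p + 4*q + 6*r ≤ x → x ≤ 11*p + 5*q + 8*r → |F x| ≤ K := fun x h1 h2 => by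
    rw [← SB x (by linarith) (by linarith)]; exact k21 _ (by linarith) (by linarith)
  have k24 : ∀ x, 16*p + 8*q + 13*r ≤ x → x ≤ 20*p + 9*q + 15*r → |F x| ≤ K := fun x h1 h2 => by
    rw [← SD x (by linarith) (by linarith)]; exact k22 _ (by linarith) (by linarith)
  have k25 : ∀ x, 8*p + 4*q + 6*r ≤ x → x ≤ 14*p + 6*q + 11*r → |F x| ≤ K := fun x h1 h2 => by
    rcases le_total x (11*p + 5*q + 8*r) with h | h
    · exact k23 _ (by linarith) (by linarith)
    · exact k19 _ (by linarith) (by linarith)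
  have k26 : ∀ x, 2*p + q + r ≤ x → x ≤ 7*p + 3*q + 5*r → |F x| ≤ K := fun x h1 h2 => by
    rw [← SA x (by linarith) (by linarith)]; exact k25 _ (by linarith) (by linarith)
  have k27 : ∀ x, 7*p + 4*q + 6*r ≤ x → x ≤ 11*p + 5*q + 8*r → |F x| ≤ K := fun x h1 h2 => by
    rw [← SB x (by linarith) (by linarith)]; exact k24 _ (by linarith) (by linarith)
  have k28 : ∀ x, 0 ≤ x → x ≤ 7*p + 3*q + 5*r → |F x| ≤ K := fun x h1 h2 => by
    rcases le_total x (6*p + 2*q + 4*r) with h | h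
    · exact k22 _ (by linarith) (by linarith)
    · exact k26 _ (by linarith) (by linarith)
  have k29 : ∀ x, 0 ≤ x → x ≤ 7*p + 4*q + 5*r → |F x| ≤ K := fun x h1 h2 => by
    rcases le_total x (7*p + 3*q + 5*r) with h | h
    · exact k28 _ (by linarith) (by linarith)
    · exact k13 _ (by linarith) (by linarith)
  have k30 : ∀ x, 7*p + 4*q + 6*r ≤ x → x ≤ 14*p + 6*q + 11*r → |F x| ≤ K := fun x h1 h2 => by
    rcases le_total x (11*p + 5*q + 8*r) with h | h
    · exact k27 _ (by linarith) (by linarith)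
    · exact k25 _ (by linarith) (by linarith)
  have k31 : ∀ x, 15*p + 6*q + 12*r ≤ x → x ≤ 20*p + 9*q + 15*r → |F x| ≤ K := fun x h1 h2 => by
    rw [← SD x (by linarith) (by linarith)]; exact k29 _ (by linarith) (by linarith)
  have k32 : ∀ x, 13*p + 6*q + 10*r ≤ x → x ≤ 15*p + 6*q + 11*r → |F x| ≤ K := fun x h1 h2 => by
    rw [← SD x (by linarith) (by linarith)]; exact k30 _ (by linarith) (by linarith)
  have k33 : ∀ x, 7*p + 4*q + 6*r ≤ x → x ≤ 15*p + 6*q + 11*r → |F x| ≤ K := fun x h1 h2 => by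
    rcases le_total x (14*p + 6*q + 11*r) with h | h
    · exact k30 _ (by linarith) (by linarith)
    · exact k32 _ (by linarith) (by linarith)
  have k34 : ∀ x, 7*p + 3*q + 5*r ≤ x → x ≤ 11*p + 5*q + 8*r → |F x| ≤ K := fun x h1 h2 => by
    rw [← SB x (by linarith) (by linarith)]; exact k31 _ (by linarith) (by linarith)
  have k35 : ∀ x, 0 ≤ x → x ≤ 11*p + 5*q + 8*r → |F x| ≤ K := fun x h1 h2 => by
    rcases le_total x (7*p + 4*q + 5*r) with h | h
    · exact k29 _ (by linarith) (by linarith)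
    · exact k34 _ (by linarith) (by linarith)
  have k36 : ∀ x, 0 ≤ x → x ≤ 15*p + 6*q + 11*r → |F x| ≤ K := fun x h1 h2 => by
    rcases le_total x (11*p + 5*q + 8*r) with h | h
    · exact k35 _ (by linarith) (by linarith)
    · exact k33 _ (by linarith) (by linarith)
  have k37 : ∀ x, 13*p + 6*q + 10*r ≤ x → x ≤ 20*p + 9*q + 15*r → |F x| ≤ K := fun x h1 h2 => by
    rw [← SD x (by linarith) (by linarith)]; exact k36 _ (by linarith) (by linarith)
  have k38 : ∀ x, 0 ≤ x → x ≤ 20*p + 9*q + 15*r → |F x| ≤ K := fun x h1 h2 => by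
    rcases le_total x (15*p + 6*q + 11*r) with h | h
    · exact k36 _ (by linarith) (by linarith)
    · exact k37 _ (by linarith) (by linarith)
  exact k38
/-- `(a, b, c)` is an eigenvector of the renormalization matrix. -/
structure Eig (θ a b c : ℝ) : Prop where
  hθ : 0 < θ
  pa : 0 < a
  pb : 0 < b
  pc : 0 < c
  ea : a = 7 * (θ * a) + 3 * (θ * b) + 5 * (θ * c)
  eb : b = 4 * (θ * a) + 2 * (θ * b) + 3 * (θ * c)
  ec : c = 2 * (θ * a) + θ * b + 2 * (θ * c)

theorem Eig.scale {θ a b c : ℝ} (E : Eig θ a b c) : Eig θ (θ * a) (θ * b) (θ * c) := by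
  obtain ⟨h, pa, pb, pc, ea, eb, ec⟩ := E
  refine ⟨h, by positivity, by positivity, by positivity, ?_, ?_, ?_⟩
  · nth_rewrite 1 [ea]; ring
  · nth_rewrite 1 [eb]; ring
  · nth_rewrite 1 [ec]; ring

theorem Sol.renorm' {θ a b c α β γ δ : ℝ} {F : ℝ → ℝ} (E : Eig θ a b c)
    (S : Sol a b c α β γ δ F) :
    ∃ α' β' γ' δ' : ℝ, Sol (θ * a) (θ * b) (θ * c) α' β' γ' δ' F ∧
      α = 3 * α' + 3 * β' + 5 * γ' + 4 * δ' ∧ β = α' + 2 * β' + 3 * γ' + 3 * δ' ∧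
      γ = α' + β' + 2 * γ' + δ' ∧ δ = 2 * α' + 3 * β' + 5 * γ' + 5 * δ' := by
  have E' := E.scale
  refine Sol.renorm E'.pa E'.pb E'.pc ?_
  rw [← E.ea, ← E.eb, ← E.ec]; exact S

theorem OSol.expand {θ a b c : ℝ} {m : ℝ → ℝ} (E : Eig θ a b c) (S : OSol a b c m) :
    OSol (7 * (θ * a) + 3 * (θ * b) + 5 * (θ * c)) (4 * (θ * a) + 2 * (θ * b) + 3 * (θ * c))
      (2 * (θ * a) + θ * b + 2 * (θ * c)) m := by
  rw [← E.ea, ← E.eb, ← E.ec]; exact S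

theorem OSol.iter {θ : ℝ} {m : ℝ → ℝ} (n : ℕ) : ∀ {a b c : ℝ}, Eig θ a b c → OSol a b c m →
    m c ≤ m (θ ^ n * c) ∧ m (a + c) ≤ m (θ ^ n * (a + c)) ∧
      m (2 * a + c) ≤ m (θ ^ n * (2 * a + c)) := by
  induction n with
  | zero => intro a b c _ _; simp
  | succ n ih =>
    intro a b c E S
    have E' := E.scale
    have S' := S.expand E
    have h1 := OSol.step_c E'.pa E'.pb E'.pc S'
    have h2 := OSol.step_ac E'.pa E'.pb E'.pc S'
    have h3 := OSol.step_aac E'.pa E'.pb E'.pc S'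
    obtain ⟨i1, i2, i3⟩ := ih E' (OSol.renorm E'.pa E'.pb E'.pc S')
    have ea := E.ea
    have eb := E.eb
    have ec := E.ec
    rw [show 2 * (θ * a) + θ * b + 2 * (θ * c) = c by linarith] at h1
    rw [show 9 * (θ * a) + 4 * (θ * b) + 7 * (θ * c) = a + c by linarith] at h2
    rw [show 16 * (θ * a) + 7 * (θ * b) + 12 * (θ * c) = 2 * a + c by linarith] at h3
    rw [show θ ^ n * (θ * c) = θ ^ (n + 1) * c by ring] at i1
    rw [show θ ^ n * (θ * a + θ * c) = θ ^ (n + 1) * (a + c) by ring] at i2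
    rw [show θ ^ n * (2 * (θ * a) + θ * c) = θ ^ (n + 1) * (2 * a + c) by ring] at i3
    exact ⟨h1.trans i1, h2.trans i2, h3.trans i3⟩

theorem Sol.nonneg {θ a b c α β γ δ : ℝ} {F : ℝ → ℝ} (E : Eig θ a b c)
    (S : Sol a b c α β γ δ F) (M : MonotoneOn F (Set.Icc 0 (2 * a + b + c))) :
    0 ≤ α ∧ 0 ≤ β ∧ 0 ≤ γ ∧ 0 ≤ δ := by
  have pa := E.pa
  have pb := E.pb
  have pc := E.pc
  have h1 : F 0 ≤ F a := M ⟨by linarith, by linarith⟩ ⟨by linarith, by linarith⟩ (by linarith)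
  have h2 : F a ≤ F (a + b) :=
    M ⟨by linarith, by linarith⟩ ⟨by linarith, by linarith⟩ (by linarith)
  have h3 : F (a + b) ≤ F (a + b + c) :=
    M ⟨by linarith, by linarith⟩ ⟨by linarith, by linarith⟩ (by linarith)
  have h4 : F (a + b + c) ≤ F (2 * a + b + c) :=
    M ⟨by linarith, by linarith⟩ ⟨by linarith, by linarith⟩ (by linarith)
  rw [S.z, S.ha] at h1
  rw [S.ha, S.hb] at h2
  rw [S.hb, S.hc] at h3
  rw [S.hc, S.hd] at h4
  exact ⟨by linarith, by linarith, by linarith, by linarith⟩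

theorem Eig.mono {θ a b c : ℝ} {F : ℝ → ℝ} (E : Eig θ a b c)
    (M : MonotoneOn F (Set.Icc 0 (2 * a + b + c))) :
    MonotoneOn F (Set.Icc 0 (2 * (θ * a) + θ * b + θ * c)) := by
  have E' := E.scale
  have ea := E.ea
  have eb := E.eb
  have ec := E.ec
  have pa := E'.pa
  have pb := E'.pb
  have pc := E'.pc
  exact M.mono (Set.Icc_subset_Icc le_rfl (by linarith))

theorem Sol.diff_bound {θ : ℝ} {F : ℝ → ℝ} (n : ℕ) : ∀ {a b c α β γ δ : ℝ}, Eig θ a b c →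
    Sol a b c α β γ δ F → MonotoneOn F (Set.Icc 0 (2 * a + b + c)) →
    |α - δ| ≤ (α + β + γ + δ) * (1 / 3) ^ n := by
  induction n with
  | zero =>
    intro a b c α β γ δ E S M
    obtain ⟨h1, h2, h3, h4⟩ := S.nonneg E M
    rw [abs_le]; constructor <;> simp <;> linarith
  | succ n ih =>
    intro a b c α β γ δ E S M
    obtain ⟨α', β', γ', δ', S', r1, r2, r3, r4⟩ := S.renorm' E
    have M' := E.mono M
    obtain ⟨h1, h2, h3, h4⟩ := S'.nonneg E.scale M'
    have h := ih E.scale S' M'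
    have hk : (0 : ℝ) ≤ (1 / 3) ^ n := by positivity
    calc |α - δ| = |α' - δ'| := by congr 1; linarith
      _ ≤ (α' + β' + γ' + δ') * (1 / 3) ^ n := h
      _ ≤ ((α + β + γ + δ) * (1 / 3)) * (1 / 3) ^ n := by gcongr; linarith
      _ = _ := by ring

theorem le_zero_of_geom {x C k : ℝ} (hk : 0 ≤ k) (hk1 : k < 1) (h : ∀ n : ℕ, x ≤ C * k ^ n) :
    x ≤ 0 := by
  have := (tendsto_pow_atTop_nhds_zero_of_lt_one hk hk1).const_mul C
  rw [mul_zero] at this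
  exact ge_of_tendsto' this h

theorem Sol.eq_ends {θ a b c α β γ δ : ℝ} {F : ℝ → ℝ} (E : Eig θ a b c)
    (S : Sol a b c α β γ δ F) (M : MonotoneOn F (Set.Icc 0 (2 * a + b + c))) : α = δ := by
  have := le_zero_of_geom (by norm_num) (by norm_num) (fun n => S.diff_bound n E M)
  have := abs_nonpos_iff.mp this
  linarith

theorem Sol.wedge_bound {θ : ℝ} {F : ℝ → ℝ} (n : ℕ) : ∀ {a b c α β γ δ : ℝ}, Eig θ a b c →
    Sol a b c α β γ δ F → MonotoneOn F (Set.Icc 0 (2 * a + b + c)) →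
    |α * b - β * a| ≤ (α + β + γ + δ) * (a + b + c) * (6 * θ) ^ n ∧
    |α * c - γ * a| ≤ (α + β + γ + δ) * (a + b + c) * (6 * θ) ^ n ∧
    |β * c - γ * b| ≤ (α + β + γ + δ) * (a + b + c) * (6 * θ) ^ n := by
  induction n with
  | zero =>
    intro a b c α β γ δ E S M
    obtain ⟨h1, h2, h3, h4⟩ := S.nonneg E M
    have pa := E.pa.le
    have pb := E.pb.le
    have pc := E.pc.le
    have e : (α + β + γ + δ) * (a + b + c) * (6 * θ) ^ 0 = α * a + α * b + α * c + β * a + β * b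
      + β * c + γ * a + γ * b + γ * c + δ * a + δ * b + δ * c := by ring
    rw [e]
    have := mul_nonneg h1 pa
    have := mul_nonneg h1 pb
    have := mul_nonneg h1 pc
    have := mul_nonneg h2 pa
    have := mul_nonneg h2 pb
    have := mul_nonneg h2 pc
    have := mul_nonneg h3 pa
    have := mul_nonneg h3 pb
    have := mul_nonneg h3 pc
    have := mul_nonneg h4 pa
    have := mul_nonneg h4 pb
    have := mul_nonneg h4 pc
    refine ⟨?_, ?_, ?_⟩ <;> rw [abs_le] <;> constructor <;> linarith
  | succ n ih =>
    intro a b c α β γ δ E S M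
    obtain ⟨α', β', γ', δ', S', r1, r2, r3, r4⟩ := S.renorm' E
    have M' := E.mono M
    have E' := E.scale
    obtain ⟨h1, h2, h3, h4⟩ := S'.nonneg E' M'
    have hd := S'.eq_ends E' M'
    obtain ⟨i1, i2, i3⟩ := ih E' S' M'
    have ea := E.ea
    have eb := E.eb
    have ec := E.ec
    have hθ := E.hθ
    have pa := E.pa
    have pb := E.pb
    have pc := E.pc
    set p := θ * a with hp
    set q := θ * b with hq
    set r := θ * c with hr
    have hk : 0 ≤ (6 * θ) ^ n := by positivity
    have hB : 6 * ((α' + β' + γ' + δ') * (p + q + r) * (6 * θ) ^ n)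
        ≤ (α + β + γ + δ) * (a + b + c) * (6 * θ) ^ (n + 1) := by
      have : (α' + β' + γ' + δ') * (p + q + r) * (6 * θ) ^ n
          ≤ (α + β + γ + δ) * (p + q + r) * (6 * θ) ^ n := by
        gcongr <;> linarith
      calc _ ≤ 6 * ((α + β + γ + δ) * (p + q + r) * (6 * θ) ^ n) := by linarith
        _ = _ := by rw [hp, hq, hr]; ring
    set B := (α' + β' + γ' + δ') * (p + q + r) * (6 * θ) ^ n
    have w1 : α * b - β * a = 2 * (α' * q - β' * p) + (α' * r - γ' * p) - (β' * r - γ' * q) := by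
      rw [ea, eb, r1, r2, ← hd]; ring
    have w2 : α * c - γ * a = (α' * q - β' * p) + 4 * (α' * r - γ' * p) + (β' * r - γ' * q) := by
      rw [ea, ec, r1, r3, ← hd]; ring
    have w3 : β * c - γ * b = 2 * (α' * r - γ' * p) + (β' * r - γ' * q) := by
      rw [eb, ec, r2, r3, ← hd]; ring
    rw [w1, w2, w3]
    rw [abs_le] at i1 i2 i3
    obtain ⟨i1, j1⟩ := i1
    obtain ⟨i2, j2⟩ := i2
    obtain ⟨i3, j3⟩ := i3
    refine ⟨?_, ?_, ?_⟩ <;> rw [abs_le] <;> constructor <;> linarith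

theorem Sol.zero_bound {θ κ : ℝ} {G : ℝ → ℝ} (n : ℕ) : ∀ {a b c : ℝ}, Eig θ a b c →
    Sol a b c 0 0 0 0 G → 0 ≤ κ →
    MonotoneOn (fun x => G x + κ * x) (Set.Icc 0 (2 * a + b + c)) →
    ∀ x, 0 ≤ x → x ≤ 2 * a + b + c → |G x| ≤ κ * (2 * a + b + c) * θ ^ n := by
  induction n with
  | zero =>
    intro a b c E S hκ M x hx0 hx1
    have h1 : G 0 + κ * 0 ≤ G x + κ * x := M ⟨le_rfl, hx0.trans hx1⟩ ⟨hx0, hx1⟩ hx0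
    have h2 : G x + κ * x ≤ G (2 * a + b + c) + κ * (2 * a + b + c) :=
      M ⟨hx0, hx1⟩ ⟨hx0.trans hx1, le_rfl⟩ hx1
    rw [S.z] at h1
    rw [S.hd] at h2
    have h3 : κ * x ≤ κ * (2 * a + b + c) := by gcongr
    have h4 : 0 ≤ κ * x := by positivity
    rw [abs_le, pow_zero, mul_one]
    constructor <;> linarith
  | succ n ih =>
    intro a b c E S hκ M x hx0 hx1
    obtain ⟨α', β', γ', δ', S', r1, r2, r3, r4⟩ := S.renorm' E
    have E' := E.scale
    obtain rfl : α' = 0 := by linarith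
    obtain rfl : β' = 0 := by linarith
    obtain rfl : γ' = 0 := by linarith
    obtain rfl : δ' = 0 := by linarith
    have h := ih E' S' hκ (E.mono M)
    have ea := E.ea
    have eb := E.eb
    have ec := E.ec
    have S2 : Sol (7 * (θ * a) + 3 * (θ * b) + 5 * (θ * c))
      (4 * (θ * a) + 2 * (θ * b) + 3 * (θ * c)) (2 * (θ * a) + θ * b + 2 * (θ * c)) 0 0 0 0 G := by
      rw [← E.ea, ← E.eb, ← E.ec]; exact S
    have := Sol.cover E'.pa E'.pb E'.pc S2 h x hx0 (by linarith)
    refine this.trans (le_of_eq ?_)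
    ring

theorem Sol.linear {θ a b c α β γ δ : ℝ} {F : ℝ → ℝ} (E : Eig θ a b c) (hθ : 6 * θ < 1)
    (S : Sol a b c α β γ δ F) (M : MonotoneOn F (Set.Icc 0 (2 * a + b + c))) :
    ∃ κ, ∀ x, 0 ≤ x → x ≤ 2 * a + b + c → F x = κ * x := by
  obtain ⟨h1, h2, h3, h4⟩ := S.nonneg E M
  have hd := S.eq_ends E M
  have hθ0 := E.hθ
  have pa := E.pa
  have b1 := abs_nonpos_iff.mp (le_zero_of_geom (by positivity) hθ
    (fun n => (S.wedge_bound n E M).1))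
  have b2 := abs_nonpos_iff.mp (le_zero_of_geom (by positivity) hθ
    (fun n => (S.wedge_bound n E M).2.1))
  have f1 : α = α / a * a := by field_simp
  have f2 : β = α / a * b := by field_simp; linarith
  have f3 : γ = α / a * c := by field_simp; linarith
  have hκ : 0 ≤ α / a := by positivity
  set κ := α / a
  refine ⟨κ, ?_⟩
  have S0 : Sol a b c 0 0 0 0 (fun x => F x - κ * x) := by
    have z := S.z
    have ha := S.ha
    have hb := S.hb
    have hc := S.hc
    have he := S.hd
    refine ⟨?_, ?_, ?_, ?_, ?_, ?_, ?_, ?_, ?_⟩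
    · simp [z]
    · show F a - κ * a = _
      linarith
    · show F (a + b) - κ * (a + b) = _
      linarith
    · show F (a + b + c) - κ * (a + b + c) = _
      linarith
    · show F (2 * a + b + c) - κ * (2 * a + b + c) = _
      linarith
    · intro x y hx hx' hxy
      have := S.A x y hx hx' hxy
      obtain rfl : y = 2 * a + c - x := by linarith
      show F x - κ * x + (F (2 * a + c - x) - κ * (2 * a + c - x)) = _
      linarith
    · intro x y hx hx' hxy
      have := S.B x y hx hx' hxy
      subst hxy
      show F (x + a + c) - κ * (x + a + c) = F x - κ * x + 0 + 0
      linarith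
    · intro x y hx hx' hxy
      have := S.C x y hx hx' hxy
      subst hxy
      show F (x - a - b) - κ * (x - a - b) = F x - κ * x - 0 - 0
      linarith
    · intro x y hx hx' hxy
      have := S.D x y hx hx' hxy
      obtain rfl : y = 2 * a + b + 2 * c - x := by linarith
      show F x - κ * x + (F (2 * a + b + 2 * c - x) - κ * (2 * a + b + 2 * c - x)) = _
      linarith
  intro x hx hx'
  have := abs_nonpos_iff.mp (le_zero_of_geom hθ0.le (by linarith)
    (fun n => Sol.zero_bound n E S0 hκ (by simpa using M) x hx hx'))
  linarith

theorem atom_zero (μ : Measure ℝ) [IsProbabilityMeasure μ] {θ e : ℝ} (h0 : 0 < θ) (h1 : θ < 1)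
    (he : 0 < e) (h : ∀ n : ℕ, μ.real {e} ≤ μ.real {θ ^ n * e}) : μ.real {e} = 0 := by
  by_contra hne
  have hpos : 0 < μ.real {e} := lt_of_le_of_ne measureReal_nonneg (Ne.symm hne)
  obtain ⟨N, hN⟩ := exists_nat_gt (1 / μ.real {e})
  have hinj : Function.Injective (fun n : ℕ => θ ^ n * e) := by
    intro i j hij
    have := mul_right_cancel₀ he.ne' hij
    exact (pow_right_strictAnti₀ h0 h1).injective this
  have hs := sum_measureReal_singleton (μ := μ) ((Finset.range N).image (fun n : ℕ => θ ^ n * e))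
  rw [Finset.sum_image (fun i _ j _ hij => hinj hij)] at hs
  have h2 : ∑ _i ∈ Finset.range N, μ.real {e} ≤ ∑ i ∈ Finset.range N, μ.real {θ ^ i * e} :=
    Finset.sum_le_sum (fun i _ => h i)
  rw [hs, Finset.sum_const, Finset.card_range, nsmul_eq_mul] at h2
  rw [div_lt_iff₀ hpos] at hN
  exact absurd (h2.trans measureReal_le_one) (not_le.mpr hN)

/-- The symmetrized distribution function. -/
noncomputable def cdfMid (μ : Measure ℝ) (x : ℝ) : ℝ := (μ.real (Set.Iio x) + μ.real (Set.Iic x)) / 2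

theorem Iic_eq (μ : Measure ℝ) [IsProbabilityMeasure μ] (x : ℝ) :
    μ.real (Set.Iic x) = μ.real (Set.Iio x) + μ.real {x} := by
  rw [← measureReal_union (by simp) (measurableSet_singleton x)]
  congr 1; ext y; simp [le_iff_lt_or_eq]

theorem cdfMid_sub (μ : Measure ℝ) [IsProbabilityMeasure μ] {u v : ℝ} (h : u < v) :
    cdfMid μ v - cdfMid μ u
      = μ.real (Set.Ioo u v) + (μ.real {u} + μ.real {v}) / 2 := by
  have h1 : μ.real (Set.Iio v) = μ.real (Set.Iic u) + μ.real (Set.Ioo u v) := by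
    rw [← measureReal_union _ measurableSet_Ioo, Set.Iic_union_Ioo_eq_Iio h]
    rw [Set.disjoint_left]
    intro x hx hx'
    exact absurd hx'.1 (not_lt.mpr hx)
  have h2 := Iic_eq μ u
  have h3 := Iic_eq μ v
  unfold cdfMid
  linarith

theorem cdfMid_mono (μ : Measure ℝ) [IsProbabilityMeasure μ] : Monotone (cdfMid μ) := by
  intro u v h
  unfold cdfMid
  have h1 : μ.real (Set.Iio u) ≤ μ.real (Set.Iio v) := measureReal_mono (Set.Iio_subset_Iio h)
  have h2 : μ.real (Set.Iic u) ≤ μ.real (Set.Iic v) := measureReal_mono (Set.Iic_subset_Iic.mpr h)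
  linarith

theorem flip_eq (μ : Measure ℝ) [IsProbabilityMeasure μ] {s t k : ℝ}
    (hB : ∀ B : Set ℝ, MeasurableSet B → B ⊆ Set.Ioo (k - t) (k - s) →
      μ.real ((fun x => k - x) ⁻¹' B) = μ.real B)
    (ms : μ.real {s} = 0) (mt : μ.real {t} = 0) (ms' : μ.real {k - s} = 0)
    (mt' : μ.real {k - t} = 0) {x y : ℝ} (hs : s ≤ x) (ht : x ≤ t) (hxy : y = k - x) :
    cdfMid μ x + cdfMid μ y = cdfMid μ s + cdfMid μ (k - s) := by
  subst hxy
  rcases hs.eq_or_lt with rfl | hs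
  · rfl
  have h1 := cdfMid_sub μ hs
  have h2 := cdfMid_sub μ (show k - x < k - s by linarith)
  have h3 := hB (Set.Ioo (k - x) (k - s)) measurableSet_Ioo
    (Set.Ioo_subset_Ioo (by linarith) le_rfl)
  have e : (fun x => k - x) ⁻¹' (Set.Ioo (k - x) (k - s)) = Set.Ioo s x := by
    ext z; simp only [Set.mem_preimage, Set.mem_Ioo]
    constructor <;> rintro ⟨_, _⟩ <;> constructor <;> linarith
  rw [e] at h3
  have h4 : μ.real {x} = μ.real {k - x} := by
    rcases ht.eq_or_lt with rfl | ht
    · rw [mt, mt']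
    · have h5 := hB {k - x} (measurableSet_singleton _) (by
        rw [Set.singleton_subset_iff]; constructor <;> linarith)
      rw [← h5]
      congr 1
      ext z; simp only [Set.mem_preimage, Set.mem_singleton_iff]
      constructor <;> intro h <;> linarith
  linarith

theorem core {θ a b c L : ℝ} (E : Eig θ a b c) (hθ : 6 * θ < 1) (hL : L = 2 * a + 2 * b + 2 * c)
    (T : ℝ → ℝ) (T1 : ∀ x, x < a → T x = 2 * a + c - x)
    (T2 : ∀ x, a ≤ x → x < a + b + c → T x = L + a - x)
    (T3 : ∀ x, a + b + c ≤ x → x < 2 * a + b + 2 * c → T x = 2 * a + b + 2 * c - x)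
    (T4 : ∀ x, 2 * a + b + 2 * c ≤ x → T x = 2 * a + c + L - x)
    (μ : Measure ℝ) [IsProbabilityMeasure μ] (hμ : μ (Set.Icc 0 L) = 1)
    (hT : ∀ s : Set ℝ, MeasurableSet s → μ (T ⁻¹' s) = μ s) :
    ∀ x, 0 ≤ x → x ≤ L → cdfMid μ x = L⁻¹ * x := by
  have pa := E.pa
  have pb := E.pb
  have pc := E.pc
  have hT' : ∀ s : Set ℝ, MeasurableSet s → μ.real (T ⁻¹' s) = μ.real s := by
    intro s hs; simp only [measureReal_def, hT s hs]
  have supp : μ (Set.Icc 0 L)ᶜ = 0 := (prob_compl_eq_zero_iff measurableSet_Icc).mpr hμ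
  have supp' : ∀ s : Set ℝ, s ⊆ (Set.Icc 0 L)ᶜ → μ.real s = 0 := by
    intro s hs; simp [measureReal_def, measure_mono_null hs supp]
  have m0 : μ.real {(0 : ℝ)} = 0 := by
    rw [← hT' _ (measurableSet_singleton _)]
    apply supp'
    intro x hx hx'
    obtain ⟨hx1, hx2⟩ := hx'
    simp only [Set.mem_preimage, Set.mem_singleton_iff] at hx
    rcases lt_or_ge x a with h | h
    · rw [T1 x h] at hx; linarith
    rcases lt_or_ge x (a + b + c) with h' | h'
    · rw [T2 x h h'] at hx; linarith
    rcases lt_or_ge x (2 * a + b + 2 * c) with h'' | h''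
    · rw [T3 x h' h''] at hx; linarith
    · rw [T4 x h''] at hx; linarith
  have mT : ∀ x y, T x = y → μ.real {x} ≤ μ.real {y} := by
    intro x y h
    rw [← hT' _ (measurableSet_singleton y)]
    exact measureReal_mono (by simp [h])
  have O : OSol a b c (fun x => μ.real {x}) := by
    refine ⟨?_, ?_, ?_, ?_⟩
    · intro x y h1 h2 h
      exact mT _ _ (by rw [T1 x h2]; linarith)
    · intro x y h1 h2 h
      refine (mT x _ (T2 x h1.le (by linarith))).trans (mT _ _ ?_)
      rw [T4 _ (by linarith)]; linarith
    · intro x y h1 h2 h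
      refine (mT x _ (T2 x (by linarith) (by linarith))).trans (mT _ _ ?_)
      rw [T3 _ (by linarith) (by linarith)]; linarith
    · intro x y h1 h2 h
      exact mT _ _ (by rw [T3 x h1.le (by linarith)]; linarith)
  have zero_of_le : ∀ x y, μ.real {y} = 0 → T x = y → μ.real {x} = 0 := by
    intro x y h h'
    exact le_antisymm ((mT x y h').trans h.le) measureReal_nonneg
  have mc : μ.real {c} = 0 := atom_zero μ E.hθ (by linarith) pc (fun n => (O.iter n E).1)
  have mac : μ.real {a + c} = 0 :=
    atom_zero μ E.hθ (by linarith) (by linarith) (fun n => (O.iter n E).2.1)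
  have maac : μ.real {2 * a + c} = 0 :=
    atom_zero μ E.hθ (by linarith) (by linarith) (fun n => (O.iter n E).2.2)
  have m1 : μ.real {2 * a + b + c} = 0 :=
    zero_of_le _ _ mc (by rw [T3 _ (by linarith) (by linarith)]; linarith)
  have md3 : μ.real {2 * a + b + 2 * c} = 0 :=
    zero_of_le _ _ m1 (by rw [T4 _ (by linarith)]; linarith)
  have md2 : μ.real {a + b + c} = 0 :=
    zero_of_le _ _ mac (by rw [T3 _ (by linarith) (by linarith)]; linarith)
  have mL : μ.real {L} = 0 :=
    zero_of_le _ _ maac (by rw [T4 _ (by linarith)]; linarith)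
  have ma : μ.real {a} = 0 :=
    zero_of_le _ _ mL (by rw [T2 _ (by linarith) (by linarith)]; linarith)
  have aeN : ∀ z, μ.real {z} = 0 → ∀ᵐ x ∂μ, x ≠ z := by
    intro z hz
    rw [measureReal_eq_zero_iff] at hz
    exact compl_mem_ae_iff.mpr hz
  have aeS : ∀ᵐ x ∂μ, x ∈ Set.Icc 0 L := by
    exact mem_ae_iff.mpr supp
  have key : ∀ s t k : ℝ,
      (∀ x, 0 < x → x < L → x ≠ a → x ≠ a + b + c → x ≠ 2 * a + b + 2 * c →
        ((s < x ∧ x < t ∧ T x = k - x) ∨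
          ((x ≤ s ∨ t ≤ x) ∧ (T x ≤ k - t ∨ k - s ≤ T x)))) →
      ∀ B : Set ℝ, MeasurableSet B → B ⊆ Set.Ioo (k - t) (k - s) →
      μ.real ((fun x => k - x) ⁻¹' B) = μ.real B := by
    intro s t k H B hB hBs
    rw [← hT' B hB]
    apply measureReal_congr
    filter_upwards [aeN 0 m0, aeN a ma, aeN _ md2, aeN _ md3, aeN L mL, aeS] with x x0 x1 x2 x3 x4 x5
    apply propext
    show k - x ∈ B ↔ T x ∈ B
    rcases H x (lt_of_le_of_ne x5.1 (Ne.symm x0)) (lt_of_le_of_ne x5.2 x4) x1 x2 x3 with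
      ⟨_, _, h⟩ | ⟨h, h'⟩
    · rw [h]
    · constructor
      · intro hx
        have := hBs hx
        have t1 := this.1
        have t2 := this.2
        rcases h with h | h <;> linarith
      · intro hx
        have := hBs hx
        have t1 := this.1
        have t2 := this.2
        rcases h' with h | h <;> linarith
  have cases4 : ∀ x, x ≠ a → x ≠ a + b + c → x ≠ 2 * a + b + 2 * c →
      (x < a ∧ T x = 2 * a + c - x) ∨ (a < x ∧ x < a + b + c ∧ T x = L + a - x) ∨
      (a + b + c < x ∧ x < 2 * a + b + 2 * c ∧ T x = 2 * a + b + 2 * c - x) ∨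
      (2 * a + b + 2 * c < x ∧ T x = 2 * a + c + L - x) := by
    intro x h1 h2 h3
    rcases lt_or_gt_of_ne h1 with h | h
    · exact Or.inl ⟨h, T1 x h⟩
    rcases lt_or_gt_of_ne h2 with h' | h'
    · exact Or.inr (Or.inl ⟨h, h', T2 x h.le h'⟩)
    rcases lt_or_gt_of_ne h3 with h'' | h''
    · exact Or.inr (Or.inr (Or.inl ⟨h', h'', T3 x h'.le h''⟩))
    · exact Or.inr (Or.inr (Or.inr ⟨h'', T4 x h''.le⟩))
  have k1 := key 0 a (2 * a + c) (by
    intro x x0 xL h1 h2 h3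
    rcases cases4 x h1 h2 h3 with ⟨h, e⟩ | ⟨h, h', e⟩ | ⟨h, h', e⟩ | ⟨h, e⟩
    · exact Or.inl ⟨x0, h, e⟩
    · exact Or.inr ⟨Or.inr (by linarith), Or.inr (by linarith)⟩
    · exact Or.inr ⟨Or.inr (by linarith), Or.inl (by linarith)⟩
    · exact Or.inr ⟨Or.inr (by linarith), Or.inr (by linarith)⟩)
  have k2 := key a (a + b + c) (L + a) (by
    intro x x0 xL h1 h2 h3
    rcases cases4 x h1 h2 h3 with ⟨h, e⟩ | ⟨h, h', e⟩ | ⟨h, h', e⟩ | ⟨h, e⟩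
    · exact Or.inr ⟨Or.inl (by linarith), Or.inl (by linarith)⟩
    · exact Or.inl ⟨h, h', e⟩
    · exact Or.inr ⟨Or.inr (by linarith), Or.inl (by linarith)⟩
    · exact Or.inr ⟨Or.inr (by linarith), Or.inl (by linarith)⟩)
  have k3 := key (a + b + c) (2 * a + b + 2 * c) (2 * a + b + 2 * c) (by
    intro x x0 xL h1 h2 h3
    rcases cases4 x h1 h2 h3 with ⟨h, e⟩ | ⟨h, h', e⟩ | ⟨h, h', e⟩ | ⟨h, e⟩
    · exact Or.inr ⟨Or.inl (by linarith), Or.inr (by linarith)⟩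
    · exact Or.inr ⟨Or.inl (by linarith), Or.inr (by linarith)⟩
    · exact Or.inl ⟨h, h', by linarith⟩
    · exact Or.inr ⟨Or.inr (by linarith), Or.inr (by linarith)⟩)
  have k4 := key (2 * a + b + 2 * c) L (2 * a + c + L) (by
    intro x x0 xL h1 h2 h3
    rcases cases4 x h1 h2 h3 with ⟨h, e⟩ | ⟨h, h', e⟩ | ⟨h, h', e⟩ | ⟨h, e⟩
    · exact Or.inr ⟨Or.inl (by linarith), Or.inl (by linarith)⟩
    · exact Or.inr ⟨Or.inl (by linarith), Or.inr (by linarith)⟩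
    · exact Or.inr ⟨Or.inl (by linarith), Or.inl (by linarith)⟩
    · exact Or.inl ⟨h, xL, by linarith⟩)
  have sub : ∀ {x y : ℝ}, x = y → μ.real {y} = 0 → μ.real {x} = 0 := by
    intro x y h h'; rw [h, h']
  have f1 : ∀ x y, 0 ≤ x → x ≤ a → y = 2 * a + c - x →
      cdfMid μ x + cdfMid μ y = cdfMid μ 0 + cdfMid μ (2 * a + c) := by
    intro x y h1 h2 h
    have := flip_eq μ k1 m0 ma (sub (by ring) maac) (sub (by ring) mac) h1 h2 h
    rwa [sub_zero] at this
  have f2 : ∀ x y, a ≤ x → x ≤ a + b + c → y = L + a - x →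
      cdfMid μ x + cdfMid μ y = cdfMid μ a + cdfMid μ L := by
    intro x y h1 h2 h
    have := flip_eq μ k2 ma md2 (sub (by ring) mL) (sub (by linarith) m1) h1 h2 h
    rwa [show L + a - a = L by ring] at this
  have f3 : ∀ x y, a + b + c ≤ x → x ≤ 2 * a + b + 2 * c → y = 2 * a + b + 2 * c - x →
      cdfMid μ x + cdfMid μ y = cdfMid μ (a + b + c) + cdfMid μ (a + c) := by
    intro x y h1 h2 h
    have := flip_eq μ k3 md2 md3 (sub (by ring) mac) (sub (by ring) m0) h1 h2 h
    rwa [show 2 * a + b + 2 * c - (a + b + c) = a + c by ring] at this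
  have f4 : ∀ x y, 2 * a + b + 2 * c ≤ x → x ≤ L → y = 2 * a + c + L - x →
      cdfMid μ x + cdfMid μ y = cdfMid μ (2 * a + b + 2 * c) + cdfMid μ (2 * a + b + c) := by
    intro x y h1 h2 h
    have := flip_eq μ k4 md3 mL (sub (by linarith) m1) (sub (by ring) maac) h1 h2 h
    rwa [show 2 * a + c + L - (2 * a + b + 2 * c) = 2 * a + b + c by linarith] at this
  have F0 : cdfMid μ 0 = 0 := by
    unfold cdfMid
    rw [Iic_eq, m0, supp' (Set.Iio 0)]
    · simp
    · intro x hx hx'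
      exact absurd hx'.1 (not_le.mpr hx)
  have FL : cdfMid μ L = 1 := by
    have h1 : μ.real (Set.Iic L) = 1 := by
      have : μ (Set.Iic L) = 1 := by
        apply le_antisymm prob_le_one
        rw [← hμ]
        exact measure_mono (fun x hx => hx.2)
      simp [measureReal_def, this]
    have h2 := Iic_eq μ L
    unfold cdfMid
    linarith
  set F := cdfMid μ with hF
  have g1 := f1 a (a + c) pa.le le_rfl (by ring)
  have g2 := f2 (a + b + c) (2 * a + b + c) (by linarith) le_rfl (by linarith)
  have g3 := f3 (2 * a + b + 2 * c) 0 (by linarith) le_rfl (by ring)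
  have g3' := f3 (2 * a + b + c) c (by linarith) (by linarith) (by ring)
  have g4 := f4 L (2 * a + c) (by linarith) le_rfl (by ring)
  have g5 := f2 (a + b) (2 * a + b + 2 * c) (by linarith) (by linarith) (by linarith)
  have S : Sol a b c (F a) (F (a + b) - F a) (F (a + b + c) - F (a + b))
      (F (2 * a + b + c) - F (a + b + c)) F := by
    refine ⟨F0, rfl, by ring, by ring, by ring, ?_, ?_, ?_, ?_⟩
    · intro x y h1 h2 h
      have := f1 x y h1 h2 (by linarith)
      linarith
    · intro x y h1 h2 h
      have h3 := f2 x (L + a - x) h1 (by linarith) rfl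
      have h4 := f4 (L + a - x) y (by linarith) (by linarith) (by linarith)
      linarith
    · intro x y h1 h2 h
      have h3 := f2 x (L + a - x) (by linarith) (by linarith) rfl
      have h4 := f3 (L + a - x) y (by linarith) (by linarith) (by linarith)
      linarith
    · intro x y h1 h2 h
      have := f3 x y h1 (by linarith) (by linarith)
      linarith
  obtain ⟨κ, hκ⟩ := S.linear E hθ ((cdfMid_mono μ).monotoneOn _)
  have all : ∀ x, 0 ≤ x → x ≤ L → F x = κ * x := by
    intro x h1 h2
    rcases le_total x (2 * a + b + c) with h | h
    · exact hκ x h1 h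
    · have e1 := f2 (L + a - x) x (by linarith) (by linarith) (by ring)
      rw [hκ _ (by linarith) (by linarith)] at e1
      rw [hκ (a + b + c) (by linarith) (by linarith),
        hκ (2 * a + b + c) (by linarith) (by linarith)] at g2
      have : κ * L = κ * (2 * a + 2 * b + 2 * c) := by rw [hL]
      linarith
  have hLp : 0 < L := by linarith
  have hκL := all L hLp.le le_rfl
  rw [FL] at hκL
  intro x h1 h2
  rw [all x h1 h2]
  have : κ = L⁻¹ := by field_simp; linarith
  rw [this]

theorem measure_eq_of_cdf {L : ℝ} (hL : 0 < L) (μ : Measure ℝ) [IsProbabilityMeasure μ]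
    (hμ : μ (Set.Icc 0 L) = 1) (h : ∀ x, 0 ≤ x → x ≤ L → cdfMid μ x = L⁻¹ * x) :
    μ = ENNReal.ofReal L⁻¹ • volume.restrict (Set.Icc 0 L) := by
  have supp : μ (Set.Icc 0 L)ᶜ = 0 := (prob_compl_eq_zero_iff measurableSet_Icc).mpr hμ
  have le1 : ∀ x, cdfMid μ x ≤ μ.real (Set.Iic x) := by
    intro x
    have := Iic_eq μ x
    have : 0 ≤ μ.real {x} := measureReal_nonneg
    unfold cdfMid; linarith
  have le2 : ∀ x y, x < y → μ.real (Set.Iic x) ≤ cdfMid μ y := by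
    intro x y hxy
    have h1 : μ.real (Set.Iic x) ≤ μ.real (Set.Iio y) :=
      measureReal_mono (Set.Iic_subset_Iio.mpr hxy)
    have h2 : μ.real (Set.Iic x) ≤ μ.real (Set.Iic y) :=
      measureReal_mono (Set.Iic_subset_Iic.mpr hxy.le)
    unfold cdfMid; linarith
  apply Measure.ext_of_Iic
  intro x
  rw [Measure.smul_apply, Measure.restrict_apply measurableSet_Iic, smul_eq_mul]
  rcases lt_or_ge x 0 with hx | hx
  · have e : Set.Iic x ∩ Set.Icc 0 L = ∅ := by
      ext y; simp only [Set.mem_inter_iff, Set.mem_Iic, Set.mem_Icc, Set.mem_empty_iff_false]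
      constructor
      · rintro ⟨h1, h2, _⟩; linarith
      · exact False.elim
    rw [e, measure_empty, mul_zero]
    refine measure_mono_null ?_ supp
    intro y hy hy'
    exact absurd (hy'.1.trans hy) (not_le.mpr hx)
  rcases lt_or_ge x L with hxL | hxL
  · have e : Set.Iic x ∩ Set.Icc 0 L = Set.Icc 0 x := by
      ext y; simp only [Set.mem_inter_iff, Set.mem_Iic, Set.mem_Icc]
      constructor
      · rintro ⟨h1, h2, _⟩; exact ⟨h2, h1⟩
      · rintro ⟨h1, h2⟩; exact ⟨h2, h1, by linarith⟩
    rw [e, Real.volume_Icc, ← ENNReal.ofReal_mul (by positivity), sub_zero]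
    have : μ.real (Set.Iic x) = L⁻¹ * x := by
      apply le_antisymm
      · apply le_of_forall_pos_le_add
        intro ε hε
        set y := min L (x + L * ε) with hy
        have hxy : x < y := lt_min hxL (by nlinarith [mul_pos hL hε])
        have h1 := le2 x y hxy
        rw [h y (by linarith) (min_le_left _ _)] at h1
        refine h1.trans ?_
        calc L⁻¹ * y ≤ L⁻¹ * (x + L * ε) := by gcongr; exact min_le_right _ _
          _ = L⁻¹ * x + ε := by field_simp
      · rw [← h x hx hxL.le]; exact le1 x
    rw [← this, measureReal_def, ENNReal.ofReal_toReal (measure_ne_top _ _)]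
  · have e : Set.Iic x ∩ Set.Icc 0 L = Set.Icc 0 L := by
      apply Set.inter_eq_right.mpr
      intro y hy; exact hy.2.trans hxL
    rw [e, Real.volume_Icc, ← ENNReal.ofReal_mul (by positivity), sub_zero,
      inv_mul_cancel₀ hL.ne', ENNReal.ofReal_one]
    apply le_antisymm prob_le_one
    rw [← hμ]
    exact measure_mono (fun y hy => hy.2.trans hxL)

/-- Theorem 2.1 (unique ergodicity part): the normalized Lebesgue measure on
`[0, |λ|]` is the only `T`-invariant Borel probability measure. -/
theorem T_uniquely_ergodic
    (η : ℝ) (hη : η ^ 3 - 11 * η ^ 2 + 7 * η - 1 = 0) (hη10 : 10 < η) :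
    let l1 : ℝ := (-3 * η ^ 2 + 32 * η - 9) / 4
    let l2 : ℝ := (6 * η ^ 2 - 64 * η + 22) / 4
    let l3 : ℝ := (-2 * η ^ 2 + 22 * η - 12) / 4
    let l4 : ℝ := (5 * η ^ 2 - 54 * η + 25) / 4
    let L : ℝ := l1 + l2 + l3 + l4
    let T : ℝ → ℝ := fun x =>
      if x < l1 then -x + l1 + l3
      else if x < l1 + l2 then -x + l1 + L
      else if x < l1 + l2 + l3 then -x + l1 + l2 + l3
      else -x + l1 + l3 + L
    ∀ μ : Measure ℝ, IsProbabilityMeasure μ →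
      μ (Set.Icc 0 L) = 1 →
      (∀ s : Set ℝ, MeasurableSet s → μ (T ⁻¹' s) = μ s) →
      μ = ENNReal.ofReal L⁻¹ • volume.restrict (Set.Icc 0 L) := by
  intro l1 l2 l3 l4 L T μ _ hμ hT
  obtain ⟨c, hc⟩ : ∃ c : ℝ, c = (η ^ 2 - 10 * η - 3) / 4 := ⟨_, rfl⟩
  have lo : 10.3318 < η := by
    by_contra hcon
    push Not at hcon
    nlinarith [mul_nonneg (sub_nonneg.mpr hcon) (sub_nonneg.mpr hη10.le), sq_nonneg (η - 10),
      mul_nonneg (mul_nonneg (sub_nonneg.mpr hcon) (sub_nonneg.mpr hη10.le))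
        (sub_nonneg.mpr hη10.le)]
  have hi : η < 10.3319 := by
    by_contra hcon
    push Not at hcon
    nlinarith [mul_nonneg (sub_nonneg.mpr hcon) (sub_nonneg.mpr hη10.le), sq_nonneg (η - 10),
      mul_nonneg (mul_nonneg (sub_nonneg.mpr hcon) (sub_nonneg.mpr hη10.le))
        (sub_nonneg.mpr hη10.le)]
  have h0 : η ≠ 0 := by linarith
  have bb := mul_pos (sub_pos.mpr lo) (sub_pos.mpr hi)
  have b2 := mul_pos (sub_pos.mpr lo) (sub_pos.mpr lo)
  have d1 : l1 = (-3 * η ^ 2 + 32 * η - 9) / 4 := rfl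
  have d2 : l2 = (6 * η ^ 2 - 64 * η + 22) / 4 := rfl
  have d3 : l3 = (-2 * η ^ 2 + 22 * η - 12) / 4 := rfl
  have d4 : l4 = (5 * η ^ 2 - 54 * η + 25) / 4 := rfl
  have dL : L = l1 + l2 + l3 + l4 := rfl
  have q2 : l2 = l4 + c := by rw [d2, d4, hc]; ring
  have q3 : l3 = l1 + c := by rw [d3, d1, hc]; ring
  have E : Eig η⁻¹ l1 l4 c := by
    have hθ : 0 < η⁻¹ := by positivity
    refine ⟨hθ, ?_, ?_, ?_, ?_, ?_, ?_⟩
    · rw [d1]; nlinarith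
    · rw [d4]; nlinarith
    · rw [hc]; nlinarith
    · field_simp
      rw [d1, d4, hc]; linear_combination (-3 / 4) * hη
    · field_simp
      rw [d1, d4, hc]; linear_combination (5 / 4) * hη
    · field_simp
      rw [d1, d4, hc]; linear_combination (1 / 4) * hη
  have hθ : 6 * η⁻¹ < 1 := by
    rw [← div_eq_mul_inv, div_lt_one (by linarith)]; linarith
  have pa := E.pa
  have pb := E.pb
  have pc := E.pc
  have hT0 : ∀ x, T x = if x < l1 then -x + l1 + l3
      else if x < l1 + l2 then -x + l1 + L
      else if x < l1 + l2 + l3 then -x + l1 + l2 + l3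
      else -x + l1 + l3 + L := fun x => rfl
  clear_value T L l1 l2 l3 l4
  refine measure_eq_of_cdf (by linarith) μ hμ
    (core E hθ (by linarith) T ?_ ?_ ?_ ?_ μ hμ hT)
  · intro x h
    rw [hT0, if_pos h]; linarith
  · intro x h h'
    rw [hT0, if_neg (by linarith), if_pos (by linarith)]; linarith
  · intro x h h'
    rw [hT0, if_neg (by linarith), if_neg (by linarith), if_pos (by linarith)]; linarith
  · intro x h
    rw [hT0, if_neg (by linarith), if_neg (by linarith), if_neg (by linarith)]; linarith
end
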